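/- arXiv:0802.3737 — 4 statements merged into one kernel-verified Lean document; each statement's English description precedes it below -/
import Mathlib

section
/- Let I be a monomial ideal of R = K[x_1, ..., x_n] having linear quotients. Then ht(I) ≤ q(I) + 1, and R/I is Cohen-Macaulay if and only if ht(I) = q(I) + 1. -/
/-!
Write `R = K[x_1, …, x_n]`, let `u_j` be the generators in the given order, with
`(u_1, …, u_{j-1}) : u_j` generated by the variables in `V_j`, and `q = max |V_j|`. The theorem says
in effect that `R/I` has projective dimension `q + 1`; the proof replaces free resolutions and the
Auslander-Buchsbaum formula by Koszul homology.

*Upper bound for the depth.* Let `V_j` have `q` elements. In the multidegree of `u_j ∏_{i ∈ V_j} x_i`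
there is a Koszul cycle of `I` in exterior degree `q` whose coefficient on `V_j` is the
minimal generator `u_j` (`HasLinearQuotients.exists_chain`). It is obtained by correcting the basis
element on `V_j` by a chain of `(u_1, …, u_{j-1})`, which is possible because the degrees of the
generators do not decrease (`HasLinearQuotients.strand_exact`). Since `u_j ∉ (x_1, …, x_n) I`, the
degree `q + 1` Koszul homology of `R/I` is non-zero locally at the origin, so the depth there is at
most `n - q - 1` (`HasLinearQuotients.not_koszulAcyclic`, `koszulAcyclic_of_isWeaklyRegular`).

*Lower bound for the depth.* A maximal ideal contains a monic polynomial `f_k(x_k)` for each `k`.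
These polynomials form a regular sequence modulo any ideal of variables, up to the variables that
are killed, so the Koszul homology of `R/(V_j)` with respect to them vanishes above degree `|V_j|`.
Filtering `I` by the ideals `(u_1, …, u_j)`, the Koszul homology of `R/I` vanishes above degree `q + 1`
(`HasLinearQuotients.koszulAcyclic`), and the maximal ideal contains a regular sequence of length
`n - q - 1` (`exists_isWeaklyRegular_of_koszulAcyclic`).

*Heights.* The height of `I` is the least cardinality of a set of variables meeting the support of
every generator. Such a least set has at most `q + 1` elements (`HasLinearQuotients.exists_cover`).
If `ht I = q + 1` then all local rings of `R/I` at maximal ideals have dimension at most `n - q - 1`,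
which equals the depth (`HasLinearQuotients.isCohenMacaulayRing`). Conversely the local ring
at the origin has dimension `n - ht I`, and if this equals the depth then `ht I ≥ q + 1`
(`HasLinearQuotients.le_idealHeight`).
-/

open MvPolynomial

/-- The square-free monomial `∏ i in S, X i`. -/
noncomputable def sqMon {n : ℕ} (K : Type*) [Field K] (S : Finset (Fin n)) :
    MvPolynomial (Fin n) K := ∏ i ∈ S, X i

/-- The basis-exchange property for a family of supports. -/
def ExchangeProp {n : ℕ} (B : Finset (Finset (Fin n))) : Prop :=
  ∀ u ∈ B, ∀ v ∈ B, ∀ i ∈ u, i ∉ v → ∃ j ∈ v, j ∉ u ∧ insert j (u.erase i) ∈ B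

/-- `I` is a matroidal ideal of degree `d`, whose minimal monomial generators are the
square-free monomials with supports in `B`. -/
def IsMatroidal {n : ℕ} (K : Type*) [Field K] (I : Ideal (MvPolynomial (Fin n) K))
    (B : Finset (Finset (Fin n))) (d : ℕ) : Prop :=
  B.Nonempty ∧ (∀ S ∈ B, S.card = d) ∧ ExchangeProp B ∧
    I = Ideal.span (sqMon K '' (B : Set (Finset (Fin n))))

/-- `supp(I) = {x_1, …, x_n}` for a matroidal ideal with generating supports `B`. -/
def FullSupport {n : ℕ} (B : Finset (Finset (Fin n))) : Prop :=
  ∀ i : Fin n, ∃ S ∈ B, i ∈ S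

/-- The height of an ideal: the infimum of the heights of the primes containing it. -/
noncomputable def idealHeight {A : Type*} [CommRing A] (I : Ideal A) : ℕ∞ :=
  ⨅ (p : PrimeSpectrum A) (_ : I ≤ p.asIdeal), Order.height p

/-- The `J`-depth of the ring `A`: the supremum of the lengths of regular sequences
contained in `J`. -/
noncomputable def ringDepth (A : Type*) [CommRing A] (J : Ideal A) : ℕ∞ :=
  ⨆ (rs : {l : List A // (∀ r ∈ l, r ∈ J) ∧ RingTheory.Sequence.IsRegular A l}),
    (rs.1.length : ℕ∞)

/-- A commutative ring is Cohen–Macaulay if at every maximal ideal the depth of the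
localization equals its Krull dimension. -/
def IsCohenMacaulayRing (A : Type*) [CommRing A] : Prop :=
  ∀ (p : Ideal A) (hp : p.IsMaximal),
    letI : p.IsPrime := hp.isPrime
    (ringDepth (Localization.AtPrime p)
        (IsLocalRing.maximalIdeal (Localization.AtPrime p)) : WithBot ℕ∞)
      = ringKrullDim (Localization.AtPrime p)

/-- The arithmetical rank of an ideal. -/
noncomputable def araIdeal {A : Type*} [CommRing A] (I : Ideal A) : ℕ :=
  sInf {m : ℕ | ∃ f : Fin m → A, (Ideal.span (Set.range f)).radical = I.radical}

/-- An ideal is unmixed if all of its associated primes have the same height. -/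
def IsUnmixed {A : Type*} [CommRing A] (I : Ideal A) : Prop :=
  ∀ p ∈ associatedPrimes A (A ⧸ I), ∀ q ∈ associatedPrimes A (A ⧸ I),
    idealHeight p = idealHeight q

/-- The square-free Veronese ideal of degree `d` in all the variables. -/
noncomputable def sqVeronese {n : ℕ} (K : Type*) [Field K] (d : ℕ) :
    Ideal (MvPolynomial (Fin n) K) :=
  Ideal.span (sqMon K '' {S : Finset (Fin n) | S.card = d})

/-- The ordering `u` of the generating supports, together with the variable sets `V`,
witnesses that the square-free monomial ideal generated by `sqMon K ∘ u` has linear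
quotients: each colon ideal `⟨u_0, …, u_{j-1}⟩ : u_j` is generated by the variables in
`V j`. -/
def LinearQuotientWitness {n s : ℕ} (K : Type*) [Field K]
    (u : Fin s → Finset (Fin n)) (V : Fin s → Finset (Fin n)) : Prop :=
  ∀ j : Fin s,
    (Ideal.span (sqMon K '' (u '' {k | k < j}))).colon (Ideal.span {sqMon K (u j)})
      = Ideal.span ((fun i => (X i : MvPolynomial (Fin n) K)) '' (V j : Set (Fin n)))

/-- The linear quotient index `q(I)` attached to a linear quotient witness:
the maximum, over `j ≥ 1`, of the number of variables generating the `j`-th colon ideal. -/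
def lqIndex {n s : ℕ} (V : Fin s → Finset (Fin n)) : ℕ :=
  (Finset.univ.filter fun j : Fin s => (j : ℕ) ≠ 0).sup fun j => (V j).card

open CategoryTheory in
/-- The module `M` has projective dimension at most `k`. -/
def HasProjDimLE {A : Type*} [CommRing A] (M : ModuleCat A) (k : ℕ) : Prop :=
  ∃ P : ProjectiveResolution M, ∀ i : ℕ, k < i → Limits.IsZero (P.complex.X i)

/-- The ideal generated by the variables `X i`, `i ∈ A`. -/
noncomputable def varIdeal {n : ℕ} (K : Type*) [Field K] (A : Finset (Fin n)) :
    Ideal (MvPolynomial (Fin n) K) :=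
  Ideal.span ((fun i => (X i : MvPolynomial (Fin n) K)) '' (A : Set (Fin n)))

/-! ### The Koszul complex in coordinates -/

section Koszul

variable {n : ℕ} {R : Type*} [CommRing R] {M : Type*} [AddCommGroup M] [Module R M]

/-- The sign of `e_k ∧ e_τ` when it is rewritten in increasing order. -/
def ksgn (k : Fin n) (τ : Finset (Fin n)) : ℤ := (-1) ^ (τ.filter (· < k)).card

lemma ksgn_mul_self (k : Fin n) (τ : Finset (Fin n)) : ksgn k τ * ksgn k τ = 1 := by
  simp [ksgn, ← mul_pow]

lemma ksgn_insert {k l : Fin n} {τ : Finset (Fin n)} (hl : l ∉ τ) :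
    ksgn k (insert l τ) = if l < k then -ksgn k τ else ksgn k τ := by
  unfold ksgn
  rw [Finset.filter_insert]
  split_ifs with h
  · rw [Finset.card_insert_of_notMem (by simp [hl]), pow_succ]; ring
  · rfl

lemma ksgn_swap {k l : Fin n} {τ : Finset (Fin n)} (hk : k ∉ τ) (hl : l ∉ τ) (hkl : k ≠ l) :
    ksgn k τ * ksgn l (insert k τ) = -(ksgn l τ * ksgn k (insert l τ)) := by
  rw [ksgn_insert hk, ksgn_insert hl]
  rcases lt_or_gt_of_ne hkl with h | h
  · rw [if_pos h, if_neg h.not_gt]; ring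
  · rw [if_neg h.not_gt, if_pos h]; ring

lemma ksgn_swap' {k l : Fin n} {τ : Finset (Fin n)} (hk : k ∉ τ) (hl : l ∉ τ) (hkl : k ≠ l) :
    ksgn l (insert k τ) * ksgn k (insert l τ) = -(ksgn k τ * ksgn l τ) := by
  rw [ksgn_insert hk, ksgn_insert hl]
  rcases lt_or_gt_of_ne hkl with h | h
  · rw [if_pos h, if_neg h.not_gt]; ring
  · rw [if_neg h.not_gt, if_pos h]; ring

/-- The Koszul differential of the sequence `x_1, …, x_n` with coefficients in `M`. A chain
`∑ c(σ) e_σ`, where `e_σ` is the exterior product of the basis vectors indexed by `σ`, is encoded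
by its coefficient function `c`. -/
def koszulD (x : Fin n → R) : (Finset (Fin n) → M) →ₗ[R] (Finset (Fin n) → M) where
  toFun c τ := ∑ k ∈ τᶜ, ksgn k τ • x k • c (insert k τ)
  map_add' c d := by
    funext τ; simp [smul_add, Finset.sum_add_distrib]
  map_smul' r c := by
    funext τ
    simp only [Pi.smul_apply, RingHom.id_apply, Finset.smul_sum]
    refine Finset.sum_congr rfl fun k _ => ?_
    rw [smul_comm (x k) r, smul_comm (ksgn k τ) r]

lemma koszulD_apply (x : Fin n → R) (c : Finset (Fin n) → M) (τ : Finset (Fin n)) :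
    koszulD x c τ = ∑ k ∈ τᶜ, ksgn k τ • x k • c (insert k τ) := rfl

lemma koszulD_koszulD (x : Fin n → R) (c : Finset (Fin n) → M) :
    koszulD x (koszulD x c) = 0 := by
  funext τ
  simp only [koszulD_apply, Finset.smul_sum, Pi.zero_apply]
  rw [Finset.sum_sigma' τᶜ (fun k => (insert k τ)ᶜ)]
  refine Finset.sum_involution (fun p _ => ⟨p.2, p.1⟩) ?_ ?_ ?_ ?_
  · rintro ⟨k, l⟩ h
    simp only [Finset.mem_sigma, Finset.mem_compl, Finset.mem_insert, not_or] at h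
    obtain ⟨hk, hlk, hl⟩ := h
    dsimp only
    rw [Finset.insert_comm k l τ, smul_comm (x k) (ksgn l _), smul_comm (x l) (ksgn k _),
      smul_comm (x k) (x l), smul_smul (ksgn k τ), smul_smul (ksgn l τ),
      ksgn_swap hk hl (Ne.symm hlk), neg_smul, neg_add_cancel]
  · rintro ⟨k, l⟩ h _ heq
    simp only [Finset.mem_sigma, Finset.mem_compl, Finset.mem_insert, not_or] at h
    simp only [Sigma.mk.injEq, heq_eq_eq] at heq
    exact h.2.1 heq.1
  · rintro ⟨k, l⟩ h
    simp only [Finset.mem_sigma, Finset.mem_compl, Finset.mem_insert, not_or] at h ⊢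
    exact ⟨h.2.2, Ne.symm h.2.1, h.1⟩
  · rintro ⟨k, l⟩ h
    rfl

/-- Exterior multiplication by `e_k`. -/
def wedge (k : Fin n) (c : Finset (Fin n) → M) : Finset (Fin n) → M := fun σ =>
  if k ∈ σ then ksgn k (σ.erase k) • c (σ.erase k) else 0

/-- Exterior multiplication by `e_k` is a homotopy between multiplication by `x_k` and zero. -/
lemma koszulD_wedge (x : Fin n → R) (k : Fin n) (c : Finset (Fin n) → M) :
    koszulD x (wedge k c) + wedge k (koszulD x c) = x k • c := by
  funext σ
  simp only [Pi.add_apply, Pi.smul_apply]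
  by_cases hk : k ∈ σ
  · obtain ⟨ρ, hρ, rfl⟩ : ∃ ρ, k ∉ ρ ∧ σ = insert k ρ :=
      ⟨σ.erase k, Finset.notMem_erase k σ, (Finset.insert_erase hk).symm⟩
    have hc : ρᶜ = insert k (insert k ρ)ᶜ := by
      ext a; simp only [Finset.mem_compl, Finset.mem_insert]; grind
    rw [wedge, if_pos (Finset.mem_insert_self _ _), Finset.erase_insert hρ, koszulD_apply,
      koszulD_apply, hc, Finset.sum_insert (by simp), smul_add, smul_smul, ksgn_mul_self, one_smul,
      add_left_comm, add_eq_left, Finset.smul_sum, ← Finset.sum_add_distrib]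
    refine Finset.sum_eq_zero fun l hl => ?_
    simp only [Finset.mem_compl, Finset.mem_insert, not_or] at hl
    have he : (insert l (insert k ρ)).erase k = insert l ρ := by
      rw [Finset.insert_comm, Finset.erase_insert]
      simp [hρ, Ne.symm hl.1]
    rw [wedge, if_pos (by simp), he, smul_comm (x l) (ksgn k _), smul_smul, smul_smul,
      ksgn_swap' hρ hl.2 (Ne.symm hl.1), neg_smul, neg_add_cancel]
  · rw [wedge, if_neg hk, add_zero, koszulD_apply, Finset.sum_eq_single k]
    · rw [wedge, if_pos (Finset.mem_insert_self _ _), Finset.erase_insert hk,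
        smul_comm (x k) (ksgn k σ), smul_smul, ksgn_mul_self, one_smul]
    · intro l _ hl
      rw [wedge, if_neg (by simp [hk, Ne.symm hl])]; simp
    · intro h; exact absurd (Finset.mem_compl.2 hk) h

/-- The chain `c` is homogeneous of exterior degree `i`. -/
def ExtDeg (i : ℕ) (c : Finset (Fin n) → M) : Prop := ∀ σ, c σ ≠ 0 → σ.card = i

lemma ExtDeg.apply_eq_zero {i : ℕ} {c : Finset (Fin n) → M} (h : ExtDeg i c)
    {σ : Finset (Fin n)} (hσ : σ.card ≠ i) : c σ = 0 := by
  by_contra h0; exact hσ (h σ h0)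

lemma ExtDeg.add {i : ℕ} {c d : Finset (Fin n) → M} (hc : ExtDeg i c) (hd : ExtDeg i d) :
    ExtDeg i (c + d) := by
  intro σ h
  by_contra h0
  exact h (by rw [Pi.add_apply, hc.apply_eq_zero h0, hd.apply_eq_zero h0, add_zero])

lemma ExtDeg.sub {i : ℕ} {c d : Finset (Fin n) → M} (hc : ExtDeg i c) (hd : ExtDeg i d) :
    ExtDeg i (c - d) := by
  intro σ h
  by_contra h0
  exact h (by rw [Pi.sub_apply, hc.apply_eq_zero h0, hd.apply_eq_zero h0, sub_zero])

lemma ExtDeg.smul {i : ℕ} {c : Finset (Fin n) → M} (hc : ExtDeg i c) (r : R) :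
    ExtDeg i (r • c) := by
  intro σ h
  by_contra h0
  exact h (by rw [Pi.smul_apply, hc.apply_eq_zero h0, smul_zero])

lemma ExtDeg.koszulD {i : ℕ} {c : Finset (Fin n) → M} (hc : ExtDeg (i + 1) c) (x : Fin n → R) :
    ExtDeg i (koszulD x c) := by
  intro τ h
  by_contra h0
  refine h (Finset.sum_eq_zero fun k hk => ?_)
  have : (insert k τ).card ≠ i + 1 := by
    rw [Finset.card_insert_of_notMem (Finset.mem_compl.1 hk)]; omega
  rw [hc.apply_eq_zero this]; simp

lemma ExtDeg.wedge {i : ℕ} {c : Finset (Fin n) → M} (hc : ExtDeg i c) (k : Fin n) :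
    ExtDeg (i + 1) (wedge k c) := by
  intro σ h
  unfold _root_.wedge at h
  split_ifs at h with hk
  · have : c (σ.erase k) ≠ 0 := fun h0 => h (by rw [h0, smul_zero])
    rw [← hc _ this, Finset.card_erase_add_one hk]
  · exact absurd rfl h

/-- The Koszul homology `H_i(x; M)` vanishes. -/
def KoszulAcyclic (x : Fin n → R) (M : Type*) [AddCommGroup M] [Module R M] (i : ℕ) : Prop :=
  ∀ c : Finset (Fin n) → M, ExtDeg i c → koszulD x c = 0 →
    ∃ y : Finset (Fin n) → M, ExtDeg (i + 1) y ∧ koszulD x y = c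

lemma koszulAcyclic_of_lt (x : Fin n → R) {i : ℕ} (hi : n < i) : KoszulAcyclic x M i := by
  intro c hc _
  have : c = 0 := by
    funext σ
    refine hc.apply_eq_zero ?_
    have := Finset.card_le_univ σ
    rw [Fintype.card_fin] at this
    omega
  exact ⟨0, fun σ h => absurd rfl h, by simp [this]⟩

variable {A B C : Type*} [AddCommGroup A] [Module R A] [AddCommGroup B] [Module R B]
  [AddCommGroup C] [Module R C]

lemma koszulD_comp (x : Fin n → R) (f : A →ₗ[R] B) (c : Finset (Fin n) → A) :
    koszulD x (f ∘ c) = f ∘ koszulD x c := by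
  funext τ
  simp [koszulD_apply, map_sum]

lemma exists_extDeg_lift {g : B → C} (hg : ∀ c, ∃ b, g b = c) (h0 : g 0 = 0)
    {i : ℕ} {c : Finset (Fin n) → C} (hc : ExtDeg i c) :
    ∃ b : Finset (Fin n) → B, ExtDeg i b ∧ g ∘ b = c := by
  classical
  choose s hs using hg
  refine ⟨fun σ => if c σ = 0 then 0 else s (c σ), fun σ h => hc σ ?_, ?_⟩
  · intro h'; simp [h'] at h
  · funext σ
    simp only [Function.comp_apply]
    split_ifs with h
    · rw [h0, h]
    · exact hs _

lemma exists_extDeg_lift_of_exact {f : A →ₗ[R] B} {g : B →ₗ[R] C} (hfg : Function.Exact f g)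
    {i : ℕ} {b : Finset (Fin n) → B} (hb : ExtDeg i b) (h : g ∘ b = 0) :
    ∃ a : Finset (Fin n) → A, ExtDeg i a ∧ f ∘ a = b := by
  classical
  have : ∀ σ, ∃ a, f a = b σ := fun σ => (hfg (b σ)).1 (congrFun h σ)
  choose s hs using this
  refine ⟨fun σ => if b σ = 0 then 0 else s σ, fun σ h => hb σ ?_, ?_⟩
  · intro h'; simp [h'] at h
  · funext σ
    simp only [Function.comp_apply]
    split_ifs with h
    · rw [map_zero, h]
    · exact hs _

/-- The part `H_{i+1}(B) → H_{i+1}(C) → H_i(A)` of the long exact sequence of Koszul homology. -/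
lemma KoszulAcyclic.of_exact {x : Fin n → R} {f : A →ₗ[R] B} {g : B →ₗ[R] C}
    (hf : Function.Injective f) (hg : Function.Surjective g) (hfg : Function.Exact f g) {i : ℕ}
    (hB : KoszulAcyclic x B (i + 1)) (hA : KoszulAcyclic x A i) : KoszulAcyclic x C (i + 1) := by
  intro c hc hdc
  obtain ⟨b, hb, rfl⟩ := exists_extDeg_lift hg (map_zero g) hc
  rw [koszulD_comp] at hdc
  obtain ⟨a, ha, hab⟩ := exists_extDeg_lift_of_exact hfg (hb.koszulD x) hdc
  have hda : koszulD x a = 0 := by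
    have h0 : f ∘ koszulD x a = 0 := by
      rw [← koszulD_comp, hab, koszulD_koszulD]
    funext σ
    exact hf (by simpa using congrFun h0 σ)
  obtain ⟨a', ha', haa'⟩ := hA a ha hda
  have hfa' : ExtDeg (i + 1) (f ∘ a') := fun σ h => ha' σ fun h0 => h (by simp [h0])
  obtain ⟨y, hy, hyb⟩ := hB (b - f ∘ a') (hb.sub hfa') (by
    rw [map_sub, koszulD_comp, haa', hab, sub_self])
  refine ⟨g ∘ y, fun σ h => hy σ fun h0 => h (by simp [h0]), ?_⟩
  rw [koszulD_comp, hyb]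
  funext σ
  simp [hfg.apply_apply_eq_zero]

/-- If `r ∈ (x)` is a nonzerodivisor on `M` and `C ≅ M / r M`, then `H_{i+1}(C) = 0` implies
`H_i(M) = 0`: the ideal `(x)` annihilates Koszul homology, so `H_i(M)` is a quotient of
`H_{i+1}(C)`. -/
lemma KoszulAcyclic.of_regular {x : Fin n → R} {r : R} (hr : r ∈ Ideal.span (Set.range x))
    {g : M →ₗ[R] C} (hreg : IsSMulRegular M r) (hg : Function.Surjective g)
    (hker : ∀ m, g m = 0 ↔ ∃ m', r • m' = m) {i : ℕ} (hC : KoszulAcyclic x C (i + 1)) :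
    KoszulAcyclic x M i := by
  intro z hz hdz
  have hex : Function.Exact (LinearMap.lsmul R M r) g := fun m => by
    rw [hker]; rfl
  obtain ⟨w, hw, hwz⟩ : ∃ w : Finset (Fin n) → M, ExtDeg (i + 1) w ∧ koszulD x w = r • z := by
    refine Submodule.span_induction (p := fun r _ =>
      ∃ w : Finset (Fin n) → M, ExtDeg (i + 1) w ∧ koszulD x w = r • z) ?_ ?_ ?_ ?_ hr
    · rintro _ ⟨k, rfl⟩
      refine ⟨wedge k z, hz.wedge k, ?_⟩
      rw [← koszulD_wedge, hdz]
      have : wedge k (0 : Finset (Fin n) → M) = 0 := by funext σ; simp [wedge]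
      rw [this, add_zero]
    · exact ⟨0, fun σ h => absurd rfl h, by simp⟩
    · rintro a b _ _ ⟨v, hv, hva⟩ ⟨w, hw, hwb⟩
      exact ⟨v + w, hv.add hw, by rw [map_add, hva, hwb, add_smul]⟩
    · rintro a b _ ⟨w, hw, hwb⟩
      exact ⟨a • w, hw.smul a, by rw [map_smul, hwb, smul_assoc]⟩
  have hgw : koszulD x (g ∘ w) = 0 := by
    rw [koszulD_comp, hwz]
    funext σ
    simpa using (hker _).2 ⟨z σ, rfl⟩
  obtain ⟨v, hv, hvw⟩ := hC (g ∘ w) (fun σ h => hw σ fun h0 => h (by simp [h0])) hgw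
  obtain ⟨v', hv', rfl⟩ := exists_extDeg_lift hg (map_zero g) hv
  obtain ⟨u, hu, huw⟩ := exists_extDeg_lift_of_exact hex (hw.sub (hv'.koszulD x)) (by
    funext σ
    have := congrFun hvw σ
    rw [koszulD_comp] at this
    simpa [sub_eq_zero] using this.symm)
  refine ⟨u, hu, ?_⟩
  have h1 : r • koszulD x u = r • z := by
    rw [← hwz, ← map_smul]
    have : r • u = w - koszulD x v' := huw
    rw [this, map_sub, koszulD_koszulD, sub_zero]
  funext σ
  exact hreg (congrFun h1 σ)

end Koszul

/-! ### Koszul homology and regular sequences -/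

section Depth

open RingTheory.Sequence
open scoped Pointwise

universe u v

/-- Koszul homology of `M` vanishes above degree `n - t` when the ideal `(x_1, …, x_n)` contains
a regular sequence of length `t` on `M`. -/
lemma koszulAcyclic_of_isWeaklyRegular {n : ℕ} {R : Type u} [CommRing R] (x : Fin n → R)
    (rs : List R) (hrs : ∀ r ∈ rs, r ∈ Ideal.span (Set.range x)) :
    ∀ {M : Type v} [AddCommGroup M] [Module R M], IsWeaklyRegular M rs →
      ∀ i, n < i + rs.length → KoszulAcyclic x M i := by
  induction rs with
  | nil => intro M _ _ _ i hi; exact koszulAcyclic_of_lt x (by simpa using hi)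
  | cons r rs ih =>
    intro M _ _ hreg i hi
    rw [isWeaklyRegular_cons_iff] at hreg
    refine KoszulAcyclic.of_regular (hrs r List.mem_cons_self)
      (g := (r • (⊤ : Submodule R M)).mkQ) hreg.1 (Submodule.mkQ_surjective _) (fun m => ?_)
      (ih (fun s hs => hrs s (List.mem_cons_of_mem _ hs)) hreg.2 (i + 1) (by
        rw [List.length_cons] at hi; omega))
    rw [Submodule.mkQ_apply, Submodule.Quotient.mk_eq_zero,
      Submodule.mem_smul_pointwise_iff_exists]
    simp

/-- If the top Koszul homology vanishes then no associated prime of `M` contains all the `x_k`,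
hence `(x)` contains a nonzerodivisor on `M`. -/
lemma exists_regular_of_koszulAcyclic {n : ℕ} {R : Type u} [CommRing R] [IsNoetherianRing R]
    (x : Fin n → R) {M : Type v} [AddCommGroup M] [Module R M] [Module.Finite R M]
    (h : KoszulAcyclic x M n) : ∃ r ∈ Ideal.span (Set.range x), IsSMulRegular M r := by
  classical
  by_contra! hcon
  have hsub : (Ideal.span (Set.range x) : Set R) ⊆ ⋃ p ∈ associatedPrimes R M, p := by
    intro r hr
    rw [biUnion_associatedPrimes_eq_zero_divisors]
    have := hcon r hr
    rw [isSMulRegular_iff_right_eq_zero_of_smul] at this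
    push Not at this
    obtain ⟨m, h1, h2⟩ := this
    exact ⟨m, h2, h1⟩
  obtain ⟨P, hP, hle⟩ := (Ideal.subset_union_prime_finite (f := id)
    (associatedPrimes.finite R M) 0 0 (fun p hp _ _ => hp.1)).1 hsub
  obtain ⟨hPp, m, hm⟩ := isAssociatedPrime_iff.1 hP
  have hxm : ∀ k, x k • m = 0 := fun k => by
    have : x k ∈ P := hle (Ideal.subset_span ⟨k, rfl⟩)
    rw [hm] at this
    simpa [Submodule.mem_colon_singleton] using this
  obtain ⟨y, hy, hyc⟩ := h (fun σ => if σ = Finset.univ then m else 0) (fun σ hσ => by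
      have : σ = Finset.univ := by by_contra h0; simp [h0] at hσ
      simp [this]) (by
    funext τ
    rw [koszulD_apply]
    refine Finset.sum_eq_zero fun k _ => ?_
    split_ifs <;> simp [hxm])
  have hm0 : m = 0 := by
    have := congrFun hyc Finset.univ
    simpa [koszulD_apply] using this.symm
  apply hPp.ne_top
  rw [hm, hm0, Ideal.eq_top_iff_one]
  simp [Submodule.mem_colon_singleton]

/-- Over a Noetherian ring, vanishing of the Koszul homology of `M` above degree `n - t` yields
a regular sequence of length `t` on `M` inside `(x_1, …, x_n)`. -/
lemma exists_isWeaklyRegular_of_koszulAcyclic {n : ℕ} {R : Type u} [CommRing R]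
    [IsNoetherianRing R] (x : Fin n → R) (t : ℕ) (ht : t ≤ n) :
    ∀ {M : Type v} [AddCommGroup M] [Module R M] [Module.Finite R M],
      (∀ i, n < i + t → KoszulAcyclic x M i) →
      ∃ rs : List R, rs.length = t ∧ (∀ r ∈ rs, r ∈ Ideal.span (Set.range x)) ∧
        IsWeaklyRegular M rs := by
  induction t with
  | zero => intro M _ _ _ _; exact ⟨[], rfl, by simp, IsWeaklyRegular.nil R M⟩
  | succ t ih =>
    intro M _ _ _ h
    obtain ⟨r, hr, hreg⟩ := exists_regular_of_koszulAcyclic x (h n (by omega))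
    have hq : ∀ i, n < i + t → KoszulAcyclic x (QuotSMulTop r M) i := by
      rintro (_ | i) hi
      · omega
      · refine KoszulAcyclic.of_exact (f := LinearMap.lsmul R M r)
          (g := (r • (⊤ : Submodule R M)).mkQ) hreg (Submodule.mkQ_surjective _) (fun m => ?_)
          (h _ (by omega)) (h _ (by omega))
        rw [Submodule.mkQ_apply, Submodule.Quotient.mk_eq_zero,
          Submodule.mem_smul_pointwise_iff_exists]
        simp
    obtain ⟨rs, hlen, hmem, hrs⟩ := ih (by omega) hq
    exact ⟨r :: rs, by simp [hlen], by simpa [hr] using hmem, IsWeaklyRegular.cons hreg hrs⟩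

end Depth

/-! ### Univariate polynomials in separate variables -/

section Separate

variable {K : Type*} [Field K] {n : ℕ}

/-- A monic polynomial in `x_k` is a nonzerodivisor modulo an ideal whose generators do not
involve `x_k`. -/
lemma isSMulRegular_aeval_X (k : Fin n) {f : Polynomial K} (hf : f.Monic)
    {S : Set (MvPolynomial (Fin n) K)} (hS : S ⊆ supported K ({k}ᶜ : Set (Fin n))) :
    IsSMulRegular (MvPolynomial (Fin n) K ⧸ Ideal.span S)
      (Polynomial.aeval (X k : MvPolynomial (Fin n) K) f) := by
  set J := Ideal.span S
  -- `φ` renames `x_k` to a new variable `T`; substituting `x_k` back for `T` inverts it.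
  let φ : MvPolynomial (Fin n) K →ₐ[K] Polynomial (MvPolynomial (Fin n) K) :=
    aeval fun i => if i = k then Polynomial.X else Polynomial.C (X i)
  have hψ : ∀ g, Polynomial.eval (X k) (φ g) = g := by
    intro g
    have : ((Polynomial.aeval (R := MvPolynomial (Fin n) K) (X k)).restrictScalars K).comp φ
        = AlgHom.id K _ := by
      ext i
      by_cases hi : i = k
      · simp [φ, hi]
      · simp [φ, hi]
    have h2 := DFunLike.congr_fun this g
    simpa [Polynomial.aeval_def, Polynomial.eval₂_eq_eval_map] using h2
  have hC : ∀ g ∈ supported K ({k}ᶜ : Set (Fin n)), φ g = Polynomial.C g := by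
    intro g hg
    unfold supported at hg
    refine Algebra.adjoin_induction ?_ ?_ ?_ ?_ hg
    · rintro _ ⟨i, hi, rfl⟩
      have : i ≠ k := hi
      simp [φ, this]
    · intro r
      rw [AlgHom.commutes]; rfl
    · intro a b _ _ ha hb; rw [map_add, map_add, ha, hb]
    · intro a b _ _ ha hb; rw [map_mul, map_mul, ha, hb]
  have hφJ : ∀ g ∈ J, φ g ∈ J.map (Polynomial.C) := by
    have : J.map φ.toRingHom ≤ J.map Polynomial.C := by
      rw [Ideal.map_span, Ideal.span_le]
      rintro _ ⟨g, hg, rfl⟩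
      change φ g ∈ _
      rw [hC g (hS hg)]
      exact Ideal.mem_map_of_mem _ (Ideal.subset_span hg)
    exact fun g hg => this (Ideal.mem_map_of_mem _ hg)
  have hker : ∀ g : Polynomial (MvPolynomial (Fin n) K), g ∈ J.map Polynomial.C ↔
      g.map (Ideal.Quotient.mk J) = 0 := by
    intro g
    have := Polynomial.ker_mapRingHom (Ideal.Quotient.mk J)
    rw [Ideal.mk_ker] at this
    rw [← this]; rfl
  rw [isSMulRegular_iff_right_eq_zero_of_smul]
  intro m hm
  obtain ⟨g, rfl⟩ := Ideal.Quotient.mk_surjective m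
  replace hm : Ideal.Quotient.mk J (Polynomial.aeval (X k) f * g) = 0 := hm
  rw [Ideal.Quotient.eq_zero_iff_mem] at hm
  have h1 := (hker _).1 (hφJ _ hm)
  have hφf : φ (Polynomial.aeval (X k) f) = f.map (algebraMap K (MvPolynomial (Fin n) K)) := by
    rw [← Polynomial.aeval_algHom_apply]
    have : φ (X k) = Polynomial.X := by simp [φ]
    rw [this, Polynomial.aeval_def]
    rfl
  rw [map_mul, Polynomial.map_mul, hφf, Polynomial.map_map] at h1
  have h2 := ((hf.map _).mul_right_eq_zero_iff).1 h1
  have h3 := (hker _).2 h2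
  have h4 : J.map (Polynomial.C) ≤ J.comap (Polynomial.evalRingHom (X k)) := by
    rw [Ideal.map_le_iff_le_comap]
    intro a ha
    simpa using ha
  have h5 := h4 h3
  rw [Ideal.mem_comap, Polynomial.coe_evalRingHom, hψ] at h5
  exact Ideal.Quotient.eq_zero_iff_mem.2 h5

lemma koszulAcyclic_separate {f : Fin n → Polynomial K} (hf : ∀ k, (f k).Monic)
    (L : Finset (Fin n)) :
    ∀ S : Set (MvPolynomial (Fin n) K), S ⊆ supported K ((L : Set (Fin n))ᶜ) →
      ∀ i, n < i + L.card →
        KoszulAcyclic (fun k => Polynomial.aeval (X k : MvPolynomial (Fin n) K) (f k))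
          (MvPolynomial (Fin n) K ⧸ Ideal.span S) i := by
  induction L using Finset.induction_on with
  | empty => intro S _ i hi; exact koszulAcyclic_of_lt _ (by simpa using hi)
  | insert k L hk ih =>
    intro S hS i hi
    set r : MvPolynomial (Fin n) K := Polynomial.aeval (X k) (f k) with hr
    have hle : Ideal.span S ≤ Ideal.span (insert r S) := Ideal.span_mono (Set.subset_insert _ _)
    refine KoszulAcyclic.of_regular (r := r) (Ideal.subset_span ⟨k, rfl⟩)
      (g := Submodule.factor hle)
      (isSMulRegular_aeval_X k (hf k) (hS.trans ?_)) (Submodule.factor_surjective hle)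
      (fun m => ?_) (ih (insert r S) ?_ (i + 1) ?_)
    · refine SetLike.coe_subset_coe.2 (supported_mono ?_)
      simp
    · obtain ⟨g, rfl⟩ := Ideal.Quotient.mk_surjective m
      have : Submodule.factor hle (Ideal.Quotient.mk _ g)
        = (Submodule.Quotient.mk g : _ ⧸ Ideal.span (insert r S)) := rfl
      rw [this, Submodule.Quotient.mk_eq_zero, Ideal.mem_span_insert]
      constructor
      · rintro ⟨a, z, hz, rfl⟩
        refine ⟨Ideal.Quotient.mk _ a, ?_⟩
        change Ideal.Quotient.mk _ (r * a) = _
        rw [← sub_eq_zero, ← map_sub, Ideal.Quotient.eq_zero_iff_mem]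
        have : r * a - (a * r + z) = -z := by ring
        rw [this]; exact neg_mem hz
      · rintro ⟨m', hm'⟩
        obtain ⟨a, rfl⟩ := Ideal.Quotient.mk_surjective m'
        replace hm' : Ideal.Quotient.mk (Ideal.span S) (r * a) = Ideal.Quotient.mk _ g := hm'
        rw [eq_comm, ← sub_eq_zero, ← map_sub, Ideal.Quotient.eq_zero_iff_mem] at hm'
        exact ⟨a, _, hm', by ring⟩
    · rw [Set.insert_subset_iff]
      constructor
      · have : (X k : MvPolynomial (Fin n) K) ∈ supported K ((L : Set (Fin n))ᶜ) := by
          rw [X_mem_supported]; simpa using hk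
        exact Polynomial.aeval_mem_adjoin_singleton K (X k) |> fun h =>
          (Algebra.adjoin_le (Set.singleton_subset_iff.2 this)) h
      · refine hS.trans (SetLike.coe_subset_coe.2 (supported_mono ?_))
        simp
    · rw [Finset.card_insert_of_notMem hk] at hi; omega

lemma koszulAcyclic_varIdeal {f : Fin n → Polynomial K} (hf : ∀ k, (f k).Monic)
    (V : Finset (Fin n)) {i : ℕ} (hi : V.card < i) :
    KoszulAcyclic (fun k => Polynomial.aeval (X k : MvPolynomial (Fin n) K) (f k))
      (MvPolynomial (Fin n) K ⧸ varIdeal K V) i := by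
  refine koszulAcyclic_separate hf Vᶜ _ ?_ i ?_
  · rintro _ ⟨k, hk, rfl⟩
    exact (X_mem_supported).2 (by simpa using hk)
  · rw [Finset.card_compl, Fintype.card_fin]
    have := Finset.card_le_univ V
    rw [Fintype.card_fin] at this
    omega

end Separate

/-! ### Ideals with linear quotients: vanishing of Koszul homology -/

section LinearQuotients

variable {K : Type*} [Field K] {n s : ℕ}

/-- The ideal generated by the first `m` of the monomials with exponents `w`. -/
noncomputable def initIdeal (K : Type*) [Field K] (w : Fin s → (Fin n →₀ ℕ)) (m : ℕ) :
    Ideal (MvPolynomial (Fin n) K) :=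
  Ideal.span ((fun k => (monomial (w k) (1 : K) : MvPolynomial (Fin n) K)) '' {k | (k : ℕ) < m})

/-- The colon ideals of the ordering `w` are generated by the variable sets `V`. -/
def HasLinearQuotients (K : Type*) [Field K] (w : Fin s → (Fin n →₀ ℕ))
    (V : Fin s → Finset (Fin n)) : Prop :=
  ∀ j : Fin s, ∀ g : MvPolynomial (Fin n) K,
    g * monomial (w j) 1 ∈ initIdeal K w j ↔ g ∈ varIdeal K (V j)

lemma mem_initIdeal {w : Fin s → (Fin n →₀ ℕ)} {m : ℕ} {g : MvPolynomial (Fin n) K} :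
    g ∈ initIdeal K w m ↔ ∀ v ∈ g.support, ∃ k : Fin s, (k : ℕ) < m ∧ w k ≤ v := by
  have : (fun k => (monomial (w k) (1 : K) : MvPolynomial (Fin n) K)) '' {k | (k : ℕ) < m}
      = (fun v => monomial v (1 : K)) '' (w '' {k | (k : ℕ) < m}) := by
    rw [Set.image_image]
  rw [initIdeal, this, mem_ideal_span_monomial_image]
  simp

lemma mem_varIdeal {A : Finset (Fin n)} {g : MvPolynomial (Fin n) K} :
    g ∈ varIdeal K A ↔ ∀ v ∈ g.support, ∃ i ∈ A, v i ≠ 0 := by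
  rw [varIdeal, mem_ideal_span_X_image]
  simp

/-- The monomial form of the colon condition. -/
lemma HasLinearQuotients.exists_le_iff {w : Fin s → (Fin n →₀ ℕ)} {V : Fin s → Finset (Fin n)}
    (h : HasLinearQuotients K w V) (j : Fin s) (v : Fin n →₀ ℕ) :
    (∃ k : Fin s, k < j ∧ w k ≤ v + w j) ↔ ∃ i ∈ V j, v i ≠ 0 := by
  classical
  have := h j (monomial v 1)
  rw [monomial_mul, mul_one, mem_initIdeal, mem_varIdeal, support_monomial, support_monomial,
    if_neg one_ne_zero] at this
  simpa using this

lemma HasLinearQuotients.card_le {w : Fin s → (Fin n →₀ ℕ)} {V : Fin s → Finset (Fin n)}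
    (h : HasLinearQuotients K w V) (j : Fin s) : (V j).card ≤ lqIndex V := by
  by_cases hj : (j : ℕ) = 0
  · have : V j = ∅ := by
      by_contra h0
      obtain ⟨i, hi⟩ := Finset.nonempty_iff_ne_empty.2 h0
      obtain ⟨k, hk, -⟩ := (h.exists_le_iff j (Finsupp.single i 1)).2 ⟨i, hi, by simp⟩
      have : (k : ℕ) < j := hk
      omega
    simp [this]
  · exact Finset.le_sup (f := fun j => (V j).card) (by simp [hj])

/-- The exact sequences `0 → R/(V_j) → R/(u_1, …, u_{j-1}) → R/(u_1, …, u_j) → 0` bound the Koszul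
homology of `R/(u_1, …, u_m)`, with respect to polynomials in separate variables. -/
lemma HasLinearQuotients.koszulAcyclic {w : Fin s → (Fin n →₀ ℕ)} {V : Fin s → Finset (Fin n)}
    (h : HasLinearQuotients K w V) {f : Fin n → Polynomial K} (hf : ∀ k, (f k).Monic) {m : ℕ}
    (hm : m ≤ s) :
    ∀ i, lqIndex V + 1 < i →
      KoszulAcyclic (fun k => Polynomial.aeval (X k : MvPolynomial (Fin n) K) (f k))
        (MvPolynomial (Fin n) K ⧸ initIdeal K w m) i := by
  induction m with
  | zero =>
    intro i hi
    have : initIdeal K w 0 = varIdeal K ∅ := by simp [initIdeal, varIdeal]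
    rw [this]
    exact koszulAcyclic_varIdeal hf ∅ (by simp; omega)
  | succ m ih =>
    rintro (_ | i) hi
    · omega
    let j : Fin s := ⟨m, hm⟩
    have hle : initIdeal K w m ≤ initIdeal K w (m + 1) :=
      Ideal.span_mono (Set.image_mono fun k hk => Nat.lt_succ_of_lt hk)
    have hcol : ∀ g, g * monomial (w j) 1 ∈ initIdeal K w m ↔ g ∈ varIdeal K (V j) := h j
    have hcomap : varIdeal K (V j) ≤ Submodule.comap (LinearMap.lsmul _ _ (monomial (w j) 1))
        (initIdeal K w m) := fun g hg => by
      have := (hcol g).2 hg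
      rw [mul_comm] at this
      exact this
    refine KoszulAcyclic.of_exact
      (f := Submodule.mapQ _ _ (LinearMap.lsmul _ _ (monomial (w j) (1 : K))) hcomap)
      (g := Submodule.factor hle) ?_ (Submodule.factor_surjective hle) ?_
      (ih (Nat.le_of_succ_le hm) (i + 1) hi)
      (koszulAcyclic_varIdeal hf (V j) (by have := h.card_le j; omega))
    · rw [← LinearMap.ker_eq_bot, LinearMap.ker_eq_bot']
      intro g hg
      obtain ⟨g, rfl⟩ := Submodule.Quotient.mk_surjective _ g
      rw [Submodule.mapQ_apply, Submodule.Quotient.mk_eq_zero, LinearMap.lsmul_apply, smul_eq_mul,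
        mul_comm, hcol] at hg
      exact (Submodule.Quotient.mk_eq_zero _).2 hg
    · intro g
      obtain ⟨g, rfl⟩ := Submodule.Quotient.mk_surjective _ g
      have hins : {k : Fin s | (k : ℕ) < m + 1} = insert j {k : Fin s | (k : ℕ) < m} := by
        ext k
        simp only [Set.mem_ofPred_eq, Set.mem_insert_iff, Fin.ext_iff, j]
        omega
      have hfac : Submodule.factor hle (Submodule.Quotient.mk g) = Submodule.Quotient.mk g := rfl
      rw [hfac, Submodule.Quotient.mk_eq_zero, initIdeal, hins, Set.image_insert_eq,
        Ideal.mem_span_insert]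
      constructor
      · rintro ⟨a, z, hz, rfl⟩
        refine ⟨Submodule.Quotient.mk a, ?_⟩
        rw [Submodule.mapQ_apply, LinearMap.lsmul_apply, Submodule.Quotient.eq, smul_eq_mul]
        have : monomial (w j) 1 * a - (a * monomial (w j) 1 + z) = -z := by ring
        rw [this]
        exact neg_mem hz
      · rintro ⟨a, ha⟩
        obtain ⟨a, rfl⟩ := Submodule.Quotient.mk_surjective _ a
        rw [Submodule.mapQ_apply, LinearMap.lsmul_apply, eq_comm, Submodule.Quotient.eq,
          smul_eq_mul] at ha
        exact ⟨a, _, ha, by ring⟩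

/-! ### Multigraded strands of the Koszul complex -/

/-- The exponent of the square-free monomial with support `σ`. -/
noncomputable def ind (σ : Finset (Fin n)) : Fin n →₀ ℕ := Finsupp.indicator σ fun _ _ => 1

lemma ind_apply (σ : Finset (Fin n)) (i : Fin n) : ind σ i = if i ∈ σ then 1 else 0 := by
  simp [ind, Finsupp.indicator_apply]

lemma degree_ind (σ : Finset (Fin n)) : (ind σ).degree = σ.card := by
  rw [Finsupp.degree_eq_sum]
  simp [ind_apply]

/-- The monomial `x^b / x^σ` is divisible by one of the first `m` generators. In multidegree `b`
the Koszul complex of `(u_1, …, u_m)` is the space of `K`-valued functions supported on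
the `σ` with this property, and its differential is `koszulD 1`. -/
def InStrand (w : Fin s → (Fin n →₀ ℕ)) (b : Fin n →₀ ℕ) (m : ℕ) (σ : Finset (Fin n)) : Prop :=
  ∃ k : Fin s, (k : ℕ) < m ∧ w k + ind σ ≤ b

lemma ind_mono {σ τ : Finset (Fin n)} (h : σ ⊆ τ) : ind σ ≤ ind τ := by
  intro i
  rw [ind_apply, ind_apply]
  by_cases h1 : i ∈ σ
  · rw [if_pos h1, if_pos (h h1)]
  · rw [if_neg h1]; exact Nat.zero_le _

lemma InStrand.anti {w : Fin s → (Fin n →₀ ℕ)} {b : Fin n →₀ ℕ} {m : ℕ} {σ τ : Finset (Fin n)}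
    (h : InStrand w b m τ) (hst : σ ⊆ τ) : InStrand w b m σ := by
  obtain ⟨k, hk, hb⟩ := h
  exact ⟨k, hk, le_trans (add_le_add_right (ind_mono hst) _) hb⟩

lemma HasLinearQuotients.inStrand_iff {w : Fin s → (Fin n →₀ ℕ)} {V : Fin s → Finset (Fin n)}
    (h : HasLinearQuotients K w V) (j : Fin s) {b : Fin n →₀ ℕ} {σ : Finset (Fin n)}
    (hb : w j + ind σ ≤ b) :
    InStrand w b j σ ↔ ∃ i ∈ V j, w j i + ind σ i < b i := by
  obtain ⟨v, rfl⟩ := exists_add_of_le hb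
  have h1 : ∀ k, w k + ind σ ≤ w j + ind σ + v ↔ w k ≤ v + w j := fun k => by
    have : w j + ind σ + v = (v + w j) + ind σ := by abel
    rw [this, add_le_add_iff_right]
  have h2 : ∀ i, w j i + ind σ i < (w j + ind σ + v) i ↔ v i ≠ 0 := fun i => by
    simp only [Finsupp.add_apply]; omega
  simp only [InStrand, h1, h2]
  exact h.exists_le_iff j v

lemma add_ind_insert_le {v b : Fin n →₀ ℕ} {σ : Finset (Fin n)} {k : Fin n} (hk : k ∈ σ)
    (h : v + ind (σ.erase k) ≤ b) (hkb : v k < b k) : v + ind σ ≤ b := by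
  intro i
  have := h i
  simp only [Finsupp.add_apply, ind_apply, Finset.mem_erase] at this ⊢
  by_cases hi : i = k
  · subst hi; simp [hk]; omega
  · simpa [hi] using this

lemma exists_ne_zero_of_koszulD_ne_zero {R M : Type*} [CommRing R] [AddCommGroup M] [Module R M]
    {x : Fin n → R} {c : Finset (Fin n) → M} {τ : Finset (Fin n)} (h : koszulD x c τ ≠ 0) :
    ∃ l ∉ τ, c (insert l τ) ≠ 0 := by
  by_contra! hcon
  exact h (Finset.sum_eq_zero fun k hk => by rw [hcon k (Finset.mem_compl.1 hk)]; simp)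

lemma exists_of_wedge_ne_zero {M : Type*} [AddCommGroup M]
    {k : Fin n} {c : Finset (Fin n) → M} {σ : Finset (Fin n)} (h : wedge k c σ ≠ 0) :
    k ∈ σ ∧ c (σ.erase k) ≠ 0 := by
  unfold wedge at h
  split_ifs at h with hk
  · exact ⟨hk, fun h0 => h (by rw [h0, smul_zero])⟩
  · exact absurd rfl h

/-- `Tor_i(K, (u_1, …, u_m))` vanishes in total degrees larger than `max deg u_k + i`.
In the successive quotients `R/(V_j)`, in multidegree `b`, the homotopy `e_k ∧ (-)/x_k` is available
for any `k ∉ V_j` with `x_k ∣ x^b / u_j`; when there is no such `k`, the strand lies in exterior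
degree `deg b - deg u_j`. -/
lemma HasLinearQuotients.strand_exact {w : Fin s → (Fin n →₀ ℕ)} {V : Fin s → Finset (Fin n)}
    (h : HasLinearQuotients K w V) (b : Fin n →₀ ℕ) (i m : ℕ) (hm : m ≤ s)
    (hdeg : ∀ k : Fin s, (k : ℕ) < m → (w k).degree + i < b.degree) :
    ∀ γ : Finset (Fin n) → K, ExtDeg i γ → (∀ σ, γ σ ≠ 0 → InStrand w b m σ) →
      koszulD (1 : Fin n → K) γ = 0 →
      ∃ δ : Finset (Fin n) → K, ExtDeg (i + 1) δ ∧ (∀ σ, δ σ ≠ 0 → InStrand w b m σ) ∧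
        koszulD (1 : Fin n → K) δ = γ := by
  classical
  induction m with
  | zero =>
    intro γ _ hγ _
    refine ⟨0, fun σ h => absurd rfl h, fun σ h => absurd rfl h, ?_⟩
    rw [map_zero]
    funext σ
    by_contra h0
    obtain ⟨k, hk, -⟩ := hγ σ (fun h1 => h0 (by rw [h1]; rfl))
    omega
  | succ m ih =>
    intro γ hi hγ hd
    let j : Fin s := ⟨m, hm⟩
    have hsucc : ∀ σ, InStrand w b m σ → InStrand w b (m + 1) σ := by
      rintro σ ⟨k, hk, hb⟩
      exact ⟨k, Nat.lt_succ_of_lt hk, hb⟩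
    have hnew : ∀ σ, InStrand w b (m + 1) σ → ¬ InStrand w b m σ → w j + ind σ ≤ b := by
      rintro σ ⟨k, hk, hb⟩ hn
      have : k = j := by
        apply Fin.ext
        by_contra hne
        exact hn ⟨k, by change (k : ℕ) ≠ m at hne; omega, hb⟩
      exact this ▸ hb
    have hcol : ∀ σ, w j + ind σ ≤ b → (InStrand w b m σ ↔ ∃ i ∈ V j, w j i + ind σ i < b i) :=
      fun σ hσ => h.inStrand_iff j hσ
    have IH := ih (Nat.le_of_succ_le hm) (fun k hk => hdeg k (Nat.lt_succ_of_lt hk))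
    by_cases hk : ∃ k, k ∉ V j ∧ w j k < b k
    · obtain ⟨k, hkV, hkb⟩ := hk
      set γ' : Finset (Fin n) → K := fun σ => if InStrand w b m σ then 0 else γ σ with hγ'
      have hγ'1 : ∀ σ, γ' σ ≠ 0 → ¬ InStrand w b m σ ∧ γ σ ≠ 0 := by
        intro σ hσ
        simp only [hγ'] at hσ
        split_ifs at hσ with h1
        · exact absurd rfl hσ
        · exact ⟨h1, hσ⟩
      have hγ'2 : ∀ σ, γ' σ ≠ 0 → w j + ind σ ≤ b := fun σ hσ =>
        hnew σ (hγ σ (hγ'1 σ hσ).2) (hγ'1 σ hσ).1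
      have hγ'3 : ∀ σ, (γ - γ') σ ≠ 0 → InStrand w b m σ := by
        intro σ hσ
        by_contra h1
        simp [hγ', h1] at hσ
      have hγ'i : ExtDeg i γ' := fun σ hσ => hi σ (hγ'1 σ hσ).2
      set δ₀ := wedge k γ' with hδ₀
      have hδ₀P : ∀ σ, δ₀ σ ≠ 0 → InStrand w b (m + 1) σ := by
        intro σ hσ
        obtain ⟨hkσ, h1⟩ := exists_of_wedge_ne_zero hσ
        exact ⟨j, Nat.lt_succ_self m, add_ind_insert_le hkσ (hγ'2 _ h1) hkb⟩
      have hhom := koszulD_wedge (1 : Fin n → K) k γ'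
      rw [Pi.one_apply, one_smul] at hhom
      have hγ₁ : ∀ σ, (γ - koszulD (1 : Fin n → K) δ₀) σ ≠ 0 → InStrand w b m σ := by
        intro σ hσ
        have he : γ - koszulD (1 : Fin n → K) δ₀
            = (γ - γ') + wedge k (koszulD (1 : Fin n → K) γ') := by
          rw [hδ₀, ← sub_eq_of_eq_add hhom.symm]; abel
        by_cases h1 : (γ - γ') σ ≠ 0
        · exact hγ'3 σ h1
        · rw [he, Pi.add_apply, not_not.1 h1, zero_add] at hσ
          obtain ⟨hkσ, h2⟩ := exists_of_wedge_ne_zero hσ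
          obtain ⟨l, -, hl⟩ := exists_ne_zero_of_koszulD_ne_zero h2
          have h3 : w j + ind (σ.erase k) ≤ b :=
            le_trans (add_le_add_right (ind_mono (Finset.subset_insert _ _)) _) (hγ'2 _ hl)
          have h4 : koszulD (1 : Fin n → K) (γ - γ') (σ.erase k) ≠ 0 := by
            rw [map_sub, hd]
            simpa using h2
          obtain ⟨l', -, hl'⟩ := exists_ne_zero_of_koszulD_ne_zero h4
          have h5 : InStrand w b m (σ.erase k) := (hγ'3 _ hl').anti (Finset.subset_insert _ _)
          obtain ⟨a, haV, hab⟩ := (hcol _ h3).1 h5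
          refine (hcol _ (add_ind_insert_le hkσ h3 hkb)).2 ⟨a, haV, ?_⟩
          have hak : a ≠ k := fun h0 => hkV (h0 ▸ haV)
          simpa [ind_apply, hak] using hab
      obtain ⟨δ, hδ, hδP, hδd⟩ := IH (γ - koszulD (1 : Fin n → K) δ₀)
        (hi.sub ((hγ'i.wedge k).koszulD _)) hγ₁ (by rw [map_sub, hd, koszulD_koszulD, sub_zero])
      refine ⟨δ + δ₀, hδ.add (hγ'i.wedge k), fun σ hσ => ?_, by rw [map_add, hδd]; abel⟩
      by_cases h1 : δ σ ≠ 0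
      · exact hsucc σ (hδP σ h1)
      · refine hδ₀P σ fun h2 => hσ ?_
        rw [Pi.add_apply, h2, not_not.1 h1, add_zero]
    · push Not at hk
      have hγm : ∀ σ, γ σ ≠ 0 → InStrand w b m σ := by
        intro σ hσ
        by_contra hn
        have h1 := hnew σ (hγ σ hσ) hn
        have h2 := mt (hcol σ h1).2 hn
        push Not at h2
        have h3 : b = w j + ind σ := by
          ext a
          have := h1 a
          by_cases ha : a ∈ V j
          · exact le_antisymm (h2 a ha) this
          · have := hk a ha
            simp only [Finsupp.add_apply] at *
            omega
        have h4 := hdeg j (Nat.lt_succ_self m)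
        rw [h3, map_add, degree_ind, hi σ hσ] at h4
        exact lt_irrefl _ h4
      obtain ⟨δ, hδ, hδP, hδd⟩ := IH γ hi hγm hd
      exact ⟨δ, hδ, fun σ hσ => hsucc σ (hδP σ hσ), hδd⟩

end LinearQuotients

/-! ### A non-trivial Koszul homology class in degree `q` -/

section Nonvanishing

variable {K : Type*} [Field K] {n s : ℕ}

/-- The Koszul complex of `R` over `x_1, …, x_n`, in multidegree `b`, is the complex with
differential `koszulD 1` on the functions supported on the `σ` with `ind σ ≤ b`. -/
lemma koszulD_monomial (b : Fin n →₀ ℕ) (c : Finset (Fin n) → K) (hc : ∀ σ, c σ ≠ 0 → ind σ ≤ b)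
    (τ : Finset (Fin n)) :
    koszulD (fun k => (X k : MvPolynomial (Fin n) K)) (fun σ => monomial (b - ind σ) (c σ)) τ
      = monomial (b - ind τ) (koszulD (1 : Fin n → K) c τ) := by
  rw [koszulD_apply, koszulD_apply, map_sum]
  refine Finset.sum_congr rfl fun l hl => ?_
  rw [Finset.mem_compl] at hl
  rw [map_zsmul]
  congr 1
  by_cases h0 : c (insert l τ) = 0
  · simp [h0]
  · rw [Pi.one_apply, one_smul, smul_eq_mul, X, monomial_mul, one_mul]
    have hb := hc _ h0
    refine congrArg (fun v => monomial v (c (insert l τ))) (Finsupp.ext fun i => ?_)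
    have := hb i
    simp only [ind_apply, Finset.mem_insert] at this
    simp only [Finsupp.add_apply, Finsupp.tsub_apply, ind_apply, Finset.mem_insert,
      Finsupp.single_apply]
    by_cases hi : i = l
    · subst hi
      simp [hl] at this ⊢
      omega
    · simp [hi, Ne.symm hi]

/-- A chain `C` whose boundary is a cycle of the Koszul complex of the ideal, with coefficient
the minimal generator `u_j` on the set `V_j` of variables generating the `j`-th colon ideal. -/
lemma HasLinearQuotients.exists_chain {w : Fin s → (Fin n →₀ ℕ)} {V : Fin s → Finset (Fin n)}
    (h : HasLinearQuotients K w V) (hmin : ∀ j k : Fin s, j ≠ k → ¬ w j ≤ w k) (j : Fin s)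
    (hdeg : ∀ k : Fin s, k < j → (w k).degree ≤ (w j).degree) (hne : (V j).Nonempty) :
    ∃ C : Finset (Fin n) → MvPolynomial (Fin n) K, ExtDeg ((V j).card + 1) C ∧
      (∀ τ, koszulD (fun k => (X k : MvPolynomial (Fin n) K)) C τ ∈ initIdeal K w s) ∧
      koszulD (fun k => (X k : MvPolynomial (Fin n) K)) C (V j) = monomial (w j) 1 := by
  classical
  obtain ⟨i, hi⟩ : ∃ i, (V j).card = i + 1 :=
    ⟨(V j).card - 1, by have := hne.card_pos; omega⟩
  set b := w j + ind (V j) with hb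
  let γ₀ : Finset (Fin n) → K := Pi.single (V j) 1
  have hγ₀ : ∀ σ, γ₀ σ ≠ 0 → σ = V j := fun σ hσ => by
    by_contra h0; exact hσ (Pi.single_eq_of_ne h0 _)
  have hγ₀i : ExtDeg (i + 1) γ₀ := fun σ hσ => by rw [hγ₀ σ hσ, hi]
  obtain ⟨δ, hδ, hδP, hδd⟩ := h.strand_exact b i j j.2.le
    (fun k hk => by
      have := hdeg k hk
      rw [hb, map_add, degree_ind, hi]; omega)
    (koszulD (1 : Fin n → K) γ₀) (hγ₀i.koszulD _) (fun τ hτ => by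
      obtain ⟨l, hl, hl'⟩ := exists_ne_zero_of_koszulD_ne_zero hτ
      have hV := hγ₀ _ hl'
      have hlV : l ∈ V j := hV ▸ Finset.mem_insert_self l τ
      refine (h.inStrand_iff j (b := b) ?_).2 ⟨l, hlV, ?_⟩
      · exact add_le_add_right (ind_mono (hV ▸ Finset.subset_insert l τ)) _
      · simp [hb, ind_apply, hl, hlV])
    (koszulD_koszulD _ _)
  set z := γ₀ - δ with hz
  have hzi : ExtDeg (i + 1) z := hγ₀i.sub hδ
  have hzd : koszulD (1 : Fin n → K) z = 0 := by rw [hz, map_sub, hδd, sub_self]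
  have hzV : z (V j) = 1 := by
    have : δ (V j) = 0 := by
      by_contra h0
      obtain ⟨k, hk, hkb⟩ := hδP _ h0
      rw [hb, add_le_add_iff_right] at hkb
      exact hmin k j (fun h1 => by rw [h1] at hk; exact lt_irrefl _ hk) hkb
    rw [hz, Pi.sub_apply, this, sub_zero]
    exact Pi.single_eq_same _ _
  have hzP : ∀ σ, z σ ≠ 0 → ∃ k, w k + ind σ ≤ b := by
    intro σ hσ
    by_cases h0 : δ σ = 0
    · rw [hz, Pi.sub_apply, h0, sub_zero] at hσ
      exact ⟨j, by rw [hγ₀ σ hσ]⟩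
    · obtain ⟨k, -, hk⟩ := hδP _ h0
      exact ⟨k, hk⟩
  obtain ⟨k, hk⟩ := hne
  have hcd : koszulD (1 : Fin n → K) (wedge k z) = z := by
    have := koszulD_wedge (1 : Fin n → K) k z
    rw [hzd, Pi.one_apply, one_smul] at this
    have h0 : wedge k (0 : Finset (Fin n) → K) = 0 := by
      funext σ; simp [wedge]
    rwa [h0, add_zero] at this
  have hcb : ∀ σ, wedge k z σ ≠ 0 → ind σ ≤ b := by
    intro σ hσ
    obtain ⟨hkσ, h1⟩ := exists_of_wedge_ne_zero hσ
    obtain ⟨a, ha⟩ := hzP _ h1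
    have := add_ind_insert_le (v := 0) hkσ
      (le_trans (add_le_add_left (zero_le (a := w a)) _) ha)
      (by simp [hb, ind_apply, hk])
    rwa [zero_add] at this
  refine ⟨fun σ => monomial (b - ind σ) (wedge k z σ), ?_, ?_, ?_⟩
  · intro σ hσ
    rw [hi]
    exact hzi.wedge k σ fun h0 => hσ (by simp [h0])
  · intro τ
    rw [koszulD_monomial b _ hcb, hcd, mem_initIdeal]
    intro v hv
    rw [support_monomial] at hv
    split_ifs at hv with h0
    · simp at hv
    · rw [Finset.mem_singleton] at hv
      subst hv
      obtain ⟨a, ha⟩ := hzP _ h0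
      exact ⟨a, a.2, le_tsub_of_add_le_right ha⟩
  · rw [koszulD_monomial b _ hcb, hcd, hzV, hb, add_tsub_cancel_right]

end Nonvanishing

section Localized

variable {K : Type*} [Field K] {n s : ℕ}

lemma koszulD_map {R S : Type*} [CommRing R] [CommRing S] (φ : R →+* S) (x : Fin n → R)
    (c : Finset (Fin n) → R) (τ : Finset (Fin n)) :
    koszulD (fun k => φ (x k)) (fun σ => φ (c σ)) τ = φ (koszulD x c τ) := by
  rw [koszulD_apply, koszulD_apply, map_sum]
  refine Finset.sum_congr rfl fun l _ => ?_
  rw [map_zsmul, smul_eq_mul, smul_eq_mul, map_mul]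

/-- A minimal generator does not occur in `(x_1, …, x_n) I`. -/
lemma coeff_X_mul_eq_zero {w : Fin s → (Fin n →₀ ℕ)} (hmin : ∀ j k : Fin s, j ≠ k → ¬ w j ≤ w k)
    (j : Fin s) (l : Fin n) {g : MvPolynomial (Fin n) K} (hg : g ∈ initIdeal K w s) :
    coeff (w j) (X l * g) = 0 := by
  rw [coeff_X_mul']
  split_ifs with hl
  · by_contra h0
    obtain ⟨k, -, hk⟩ := mem_initIdeal.1 hg _ (mem_support_iff.2 h0)
    have hkj : k = j := by
      by_contra hne
      exact hmin k j hne (hk.trans tsub_le_self)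
    subst hkj
    have := hk l
    simp only [Finsupp.tsub_apply, Finsupp.single_eq_same] at this
    rw [Finsupp.mem_support_iff] at hl
    omega
  · rfl

/-- The Koszul homology of `R/I` in degree `q + 1` does not vanish locally at the origin: were
the chain `C` a boundary there, then a multiple of the minimal generator `u_j` by a polynomial
with non-zero constant term would lie in `(x_1, …, x_n) I`. -/
lemma HasLinearQuotients.not_koszulAcyclic {w : Fin s → (Fin n →₀ ℕ)} {V : Fin s → Finset (Fin n)}
    (h : HasLinearQuotients K w V) (hmin : ∀ j k : Fin s, j ≠ k → ¬ w j ≤ w k) (j : Fin s)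
    (hdeg : ∀ k : Fin s, k < j → (w k).degree ≤ (w j).degree) (hne : (V j).Nonempty)
    (p : Ideal (MvPolynomial (Fin n) K ⧸ initIdeal K w s)) [p.IsPrime]
    (hp : ∀ f, Ideal.Quotient.mk (initIdeal K w s) f ∉ p → constantCoeff f ≠ 0)
    (A : Type*) [CommRing A] [Algebra (MvPolynomial (Fin n) K ⧸ initIdeal K w s) A]
    [IsLocalization.AtPrime A p] :
    ¬ KoszulAcyclic (fun k => algebraMap _ A (Ideal.Quotient.mk (initIdeal K w s) (X k))) A
      ((V j).card + 1) := by
  classical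
  intro hac
  obtain ⟨C, hC, hCI, hCV⟩ := h.exists_chain hmin j hdeg hne
  let S := MvPolynomial (Fin n) K ⧸ initIdeal K w s
  let π : MvPolynomial (Fin n) K →+* S := Ideal.Quotient.mk (initIdeal K w s)
  let φ : S →+* A := algebraMap S A
  obtain ⟨y, -, hy⟩ := hac (fun σ => φ (π (C σ)))
    (fun σ hσ => hC σ fun h0 => hσ (by simp [h0])) (by
      funext τ
      have := koszulD_map (φ.comp π) (fun k => (X k : MvPolynomial (Fin n) K)) C τ
      refine this.trans ?_
      rw [RingHom.comp_apply, Ideal.Quotient.eq_zero_iff_mem.2 (hCI τ), map_zero]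
      rfl)
  -- clear the denominators of `y`
  obtain ⟨d, hd⟩ := IsLocalization.exist_integer_multiples_of_finite p.primeCompl y
  choose y' hy' using hd
  have h1 : ∀ σ, φ (d * π (C σ)) = φ (koszulD (fun k => π (X k)) y' σ) := by
    intro σ
    rw [← koszulD_map, map_mul, ← smul_eq_mul]
    have h2 : (fun σ => φ (y' σ)) = φ d • y := by
      funext τ
      rw [Pi.smul_apply, smul_eq_mul, ← Algebra.smul_def]
      exact hy' τ
    rw [h2, map_smul]
    change _ = φ d • koszulD (fun k => φ (π (X k))) y σ
    rw [congrFun hy σ]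
  choose e he using fun σ => IsLocalization.exists_of_eq (M := p.primeCompl) (h1 σ)
  have h3 : ∀ σ, ((∏ τ, e τ : p.primeCompl) : S) * (d * π (C σ))
      = (∏ τ, e τ : p.primeCompl) * koszulD (fun k => π (X k)) y' σ := by
    intro σ
    obtain ⟨r, hr⟩ := Finset.dvd_prod_of_mem e (Finset.mem_univ σ)
    rw [hr, mul_comm (e σ), Submonoid.coe_mul, mul_assoc, mul_assoc, he]
  obtain ⟨E, hE⟩ := Ideal.Quotient.mk_surjective ((∏ τ, e τ : p.primeCompl) : S)
  obtain ⟨D, hD⟩ := Ideal.Quotient.mk_surjective (d : S)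
  choose Y hY using fun σ => Ideal.Quotient.mk_surjective (y' σ)
  let x : Fin n → MvPolynomial (Fin n) K := X
  have hι : ∀ σ, ((E * D) • C - E • koszulD x Y) σ ∈ initIdeal K w s := by
    intro σ
    rw [← Ideal.Quotient.eq_zero_iff_mem, Pi.sub_apply, Pi.smul_apply, Pi.smul_apply, map_sub,
      smul_eq_mul, smul_eq_mul, map_mul, map_mul, map_mul, hE, hD, ← koszulD_map]
    simp only [hY]
    rw [mul_assoc]
    exact sub_eq_zero.2 (h3 σ)
  have hfin : (E * D) * monomial (w j) 1 = koszulD x ((E * D) • C - E • koszulD x Y) (V j) := by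
    rw [map_sub, map_smul, map_smul, koszulD_koszulD, smul_zero, sub_zero, Pi.smul_apply,
      smul_eq_mul, ← hCV]
  have hcoef := congrArg (coeff (w j)) hfin
  rw [koszulD_apply, coeff_sum, Finset.sum_eq_zero] at hcoef
  · have h4 := coeff_mul_monomial 0 (w j) (1 : K) (E * D)
    rw [zero_add, hcoef, mul_one] at h4
    refine hp (E * D) ?_ h4.symm
    rw [map_mul, hE, hD]
    exact ((∏ τ, e τ) * d).2
  · intro l _
    have h5 := coeff_X_mul_eq_zero hmin j l (hι (insert l (V j)))
    rw [smul_eq_mul, ← mul_smul_comm, zsmul_eq_mul, mul_left_comm]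
    have : ((ksgn l (V j) : ℤ) : MvPolynomial (Fin n) K) = MvPolynomial.C ((ksgn l (V j) : ℤ) : K) := by
      simp
    rw [this, coeff_C_mul]
    change _ * coeff (w j) (X l * _) = 0
    rw [h5, mul_zero]

end Localized

/-! ### Heights of monomial ideals -/

section Heights

variable {K : Type*} [Field K] {n s : ℕ}

lemma varIdeal_eq_ker (A : Finset (Fin n)) :
    varIdeal K A = RingHom.ker
      (aeval (fun i => if i ∈ A then (0 : MvPolynomial (Fin n) K) else X i)) := by
  set φ : MvPolynomial (Fin n) K →ₐ[K] MvPolynomial (Fin n) K :=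
    aeval (fun i => if i ∈ A then (0 : MvPolynomial (Fin n) K) else X i) with hφ
  apply le_antisymm
  · rw [varIdeal, Ideal.span_le]
    rintro _ ⟨i, hi, rfl⟩
    change φ (X i) = 0
    rw [hφ, aeval_X, if_pos (by exact_mod_cast hi)]
  · intro f hf
    have h1 : (Ideal.Quotient.mkₐ K (varIdeal K A)).comp φ = Ideal.Quotient.mkₐ K (varIdeal K A) := by
      refine algHom_ext fun i => ?_
      rw [AlgHom.comp_apply, hφ, aeval_X]
      split_ifs with hi
      · rw [map_zero, eq_comm]
        exact Ideal.Quotient.eq_zero_iff_mem.2 (Ideal.subset_span ⟨i, by exact_mod_cast hi, rfl⟩)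
      · rfl
    have h2 := DFunLike.congr_fun h1 f
    rw [AlgHom.comp_apply, show φ f = 0 from hf, map_zero] at h2
    exact Ideal.Quotient.eq_zero_iff_mem.1 h2.symm

lemma varIdeal_isPrime (A : Finset (Fin n)) : (varIdeal K A).IsPrime := by
  rw [varIdeal_eq_ker]
  exact RingHom.ker_isPrime _

lemma X_mem_varIdeal {A : Finset (Fin n)} {i : Fin n} :
    (X i : MvPolynomial (Fin n) K) ∈ varIdeal K A ↔ i ∈ A := by
  rw [mem_varIdeal, support_X]
  simp [Finsupp.single_apply]

lemma varIdeal_mono {A B : Finset (Fin n)} (h : A ⊆ B) : varIdeal K A ≤ varIdeal K B :=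
  Ideal.span_mono (Set.image_mono (by exact_mod_cast h))

lemma varIdeal_insert_lt {B : Finset (Fin n)} {k : Fin n} (hk : k ∉ B) :
    varIdeal K B < varIdeal K (insert k B) := by
  refine lt_of_le_of_ne (varIdeal_mono (Finset.subset_insert k B)) fun h => hk ?_
  rw [← X_mem_varIdeal (K := K), h, X_mem_varIdeal]
  exact Finset.mem_insert_self k B

lemma card_sub_le_height {α : Type*} [Preorder α] (A : Finset (Fin n)) (g : Finset (Fin n) → α)
    (hg : ∀ B k, A ⊆ B → k ∉ B → g B < g (insert k B)) {B : Finset (Fin n)} (hAB : A ⊆ B) :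
    ((B.card - A.card : ℕ) : ℕ∞) ≤ Order.height (g B) := by
  obtain ⟨D, hD, rfl⟩ : ∃ D, Disjoint A D ∧ B = A ∪ D :=
    ⟨B \ A, Finset.disjoint_sdiff, (Finset.union_sdiff_of_subset hAB).symm⟩
  clear hAB
  induction D using Finset.induction_on with
  | empty => simp
  | insert k D hk ih =>
    rw [Finset.disjoint_insert_right] at hD
    have hkU : k ∉ A ∪ D := by simp [hk, hD.1]
    rw [Finset.union_insert]
    refine le_trans ?_ (Order.height_add_one_le (hg _ k Finset.subset_union_left hkU))
    refine le_trans ?_ (add_le_add_left (ih hD.2) 1)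
    rw [Finset.card_insert_of_notMem hkU]
    norm_cast
    omega

lemma card_le_height_varIdeal (A : Finset (Fin n)) :
    (A.card : ℕ∞) ≤ Order.height (⟨varIdeal K A, varIdeal_isPrime A⟩ : PrimeSpectrum _) := by
  have := card_sub_le_height ∅
    (fun B => (⟨varIdeal K B, varIdeal_isPrime B⟩ : PrimeSpectrum (MvPolynomial (Fin n) K)))
    (fun B k _ hk => varIdeal_insert_lt hk) (Finset.empty_subset A)
  simpa using this

lemma height_varIdeal_le_card (A : Finset (Fin n)) :
    Order.height (⟨varIdeal K A, varIdeal_isPrime A⟩ : PrimeSpectrum _) ≤ (A.card : ℕ∞) := by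
  classical
  rw [← PrimeSpectrum.height_eq_orderHeight]
  have h1 : varIdeal K A
      = Ideal.span ((A.image fun i => (X i : MvPolynomial (Fin n) K)) : Finset _) := by
    rw [varIdeal, Finset.coe_image]
  have h2 : varIdeal K A ∈ (Ideal.span
      ((A.image fun i => (X i : MvPolynomial (Fin n) K) : Finset _) : Set _)).minimalPrimes := by
    have := varIdeal_isPrime (K := K) A
    rw [← h1, Ideal.minimalPrimes_eq_subsingleton_self]
    rfl
  refine (Ideal.height_le_card_of_mem_minimalPrimes_span_finset h2).trans ?_
  exact_mod_cast Finset.card_image_le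

/-- A monomial ideal lies in `(X_i : i ∈ A)` iff `A` meets the support of every generator. -/
lemma initIdeal_le_varIdeal_iff {w : Fin s → (Fin n →₀ ℕ)} {A : Finset (Fin n)} :
    initIdeal K w s ≤ varIdeal K A ↔ ∀ k, ∃ i ∈ A, w k i ≠ 0 := by
  classical
  rw [initIdeal, Ideal.span_le]
  constructor
  · intro h k
    have := mem_varIdeal.1 (h ⟨k, k.2, rfl⟩) (w k)
      (by rw [support_monomial, if_neg one_ne_zero]; exact Finset.mem_singleton_self _)
    exact this
  · rintro h _ ⟨k, -, rfl⟩
    refine mem_varIdeal.2 fun v hv => ?_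
    rw [support_monomial, if_neg one_ne_zero, Finset.mem_singleton] at hv
    exact hv ▸ h k

/-- The variables in a prime containing a monomial ideal generate a prime with the same
property. -/
lemma exists_varIdeal_le {w : Fin s → (Fin n →₀ ℕ)} (P : Ideal (MvPolynomial (Fin n) K))
    [P.IsPrime] (hP : initIdeal K w s ≤ P) :
    ∃ A, initIdeal K w s ≤ varIdeal K A ∧ varIdeal K A ≤ P := by
  classical
  refine ⟨Finset.univ.filter fun i => X i ∈ P, initIdeal_le_varIdeal_iff.2 fun k => ?_, ?_⟩
  · have h1 : monomial (w k) (1 : K) ∈ P := hP (Ideal.subset_span ⟨k, k.2, rfl⟩)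
    rw [monomial_eq, map_one, one_mul, Finsupp.prod, Ideal.IsPrime.prod_mem_iff] at h1
    obtain ⟨i, hi, hiP⟩ := h1
    exact ⟨i, by simpa using Ideal.IsPrime.mem_of_pow_mem ‹_› _ hiP, Finsupp.mem_support_iff.1 hi⟩
  · rw [varIdeal, Ideal.span_le]
    rintro _ ⟨i, hi, rfl⟩
    simpa using hi

lemma le_idealHeight {w : Fin s → (Fin n →₀ ℕ)} {N : ℕ}
    (h : ∀ A, initIdeal K w s ≤ varIdeal K A → N ≤ A.card) :
    (N : ℕ∞) ≤ idealHeight (initIdeal K w s) := by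
  refine le_iInf₂ fun P hP => ?_
  obtain ⟨A, hA, hAP⟩ := exists_varIdeal_le P.asIdeal hP
  have h1 : (⟨varIdeal K A, varIdeal_isPrime A⟩ : PrimeSpectrum _) ≤ P := hAP
  exact le_trans (by exact_mod_cast h A hA)
    ((card_le_height_varIdeal A).trans (Order.height_mono h1))

lemma idealHeight_le {w : Fin s → (Fin n →₀ ℕ)} {A : Finset (Fin n)}
    (hA : initIdeal K w s ≤ varIdeal K A) : idealHeight (initIdeal K w s) ≤ A.card :=
  (iInf₂_le (⟨varIdeal K A, varIdeal_isPrime A⟩ : PrimeSpectrum _) hA).trans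
    (height_varIdeal_le_card A)

/-- The local ring of `R/I` at the origin has dimension at least `n - |A|` whenever
`I ⊆ (X_i : i ∈ A)`. -/
lemma sub_card_le_height {I : Ideal (MvPolynomial (Fin n) K)} {A : Finset (Fin n)}
    (hA : I ≤ varIdeal K A) (p : PrimeSpectrum (MvPolynomial (Fin n) K ⧸ I))
    (hp : ∀ i, Ideal.Quotient.mk I (X i) ∈ p.asIdeal) :
    ((n - A.card : ℕ) : ℕ∞) ≤ Order.height p := by
  classical
  let e := I.primeSpectrumQuotientOrderIsoZeroLocus
  have hz : ∀ B, (⟨varIdeal K (A ∪ B), varIdeal_isPrime _⟩ : PrimeSpectrum _) ∈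
      PrimeSpectrum.zeroLocus (I : Set (MvPolynomial (Fin n) K)) := fun B =>
    hA.trans (varIdeal_mono Finset.subset_union_left)
  let g : Finset (Fin n) → PrimeSpectrum (MvPolynomial (Fin n) K ⧸ I) := fun B =>
    e.symm ⟨_, hz B⟩
  have h1 := card_sub_le_height A g (fun B k hAB hk => by
    refine e.symm.lt_iff_lt.2 ?_
    change varIdeal K (A ∪ B) < varIdeal K (A ∪ insert k B)
    rw [Finset.union_eq_right.2 hAB, Finset.union_eq_right.2 (hAB.trans (Finset.subset_insert k B))]
    exact varIdeal_insert_lt hk) (Finset.subset_univ A)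
  rw [Finset.card_univ, Fintype.card_fin] at h1
  refine h1.trans (Order.height_mono ?_)
  rw [← e.le_iff_le]
  simp only [g, OrderIso.apply_symm_apply]
  change varIdeal K (A ∪ Finset.univ) ≤ Ideal.comap (Ideal.Quotient.mk I) p.asIdeal
  rw [varIdeal, Ideal.span_le]
  rintro _ ⟨i, -, rfl⟩
  exact hp i

lemma height_add_idealHeight_le (I : Ideal (MvPolynomial (Fin n) K)) {N : ℕ}
    (hN : (N : ℕ∞) ≤ idealHeight I) (p : PrimeSpectrum (MvPolynomial (Fin n) K ⧸ I)) :
    Order.height p ≤ ((n - N : ℕ) : ℕ∞) := by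
  have hdim : ringKrullDim (MvPolynomial (Fin n) K) = n := by
    rw [MvPolynomial.ringKrullDim_of_isNoetherianRing, ringKrullDim_eq_zero_of_field]
    simp
  let e := I.primeSpectrumQuotientOrderIsoZeroLocus
  rw [← Order.height_orderIso e]
  refine Order.height_le fun S hS => ?_
  have h1 : (N : ℕ∞) ≤ Order.height S.head.1 := hN.trans (iInf₂_le S.head.1 S.head.2)
  have h2 : (S.length : ℕ∞) ≤ Order.coheight S.head.1 :=
    Order.length_le_coheight (p := S.map Subtype.val (fun _ _ h => h)) le_rfl
  have h3 := Order.krullDim_eq_iSup_height_add_coheight_of_nonempty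
    (α := PrimeSpectrum (MvPolynomial (Fin n) K))
  have h4 : Order.height S.head.1 + Order.coheight S.head.1 ≤ n := by
    have : ((⨆ a : PrimeSpectrum (MvPolynomial (Fin n) K), Order.height a + Order.coheight a : ℕ∞)
        : WithBot ℕ∞) = ((n : ℕ∞) : WithBot ℕ∞) := h3.symm.trans hdim
    exact (le_iSup (fun a => Order.height a + Order.coheight a) S.head.1).trans
      (WithBot.coe_inj.1 this).le
  have h5 : ((N + S.length : ℕ) : ℕ∞) ≤ n := by
    push_cast
    exact (add_le_add h1 h2).trans h4
  norm_cast at h5 ⊢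
  omega

end Heights

/-! ### Height and Cohen-Macaulayness of ideals with linear quotients -/

section Main

variable {K : Type*} [Field K] {n s : ℕ}

/-- A set `A` of variables of least cardinality among those meeting the support of every generator
has at most `q + 1` elements. Each `i ∈ A` is the only
element of `A` meeting the support of some generator; let `f i` be the first such index. If `i₀`
is chosen with `f i₀` largest, the colon ideal at the index `f i₀` contains all the variables in
`A` other than `i₀`. -/
lemma HasLinearQuotients.exists_cover {w : Fin s → (Fin n →₀ ℕ)} {V : Fin s → Finset (Fin n)}
    (h : HasLinearQuotients K w V) (hs : 0 < s) (hw : ∀ k, w k ≠ 0) :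
    ∃ A, initIdeal K w s ≤ varIdeal K A ∧ A.card ≤ lqIndex V + 1 := by
  classical
  let Q : Finset (Fin n) → Prop := fun A => ∀ k, ∃ i ∈ A, w k i ≠ 0
  have hQ : Q Finset.univ := fun k => by
    obtain ⟨i, hi⟩ := Finsupp.ne_iff.1 (hw k)
    exact ⟨i, Finset.mem_univ i, hi⟩
  obtain ⟨A, hA, hAm⟩ := exists_minimalFor_of_wellFoundedLT Q Finset.card ⟨_, hQ⟩
  refine ⟨A, initIdeal_le_varIdeal_iff.2 hA, ?_⟩
  let T : Fin n → Fin s → Prop := fun i k => ∀ i' ∈ A, i' ≠ i → w k i' = 0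
  have hT : ∀ i : Fin n, ∃ k : Fin s, i ∈ A → T i k ∧ ∀ l < k, ¬ T i l := by
    intro i
    by_cases hi : i ∈ A
    · have h1 : ∃ k, T i k := by
        by_contra! hcon
        have h2 : Q (A.erase i) := fun k => by
          have := hcon k
          simp only [T] at this
          push Not at this
          obtain ⟨i', hi', hne, h0⟩ := this
          exact ⟨i', Finset.mem_erase.2 ⟨hne, hi'⟩, h0⟩
        have h3 := hAm h2 (Finset.card_erase_le)
        exact absurd h3 (not_le.2 (Finset.card_erase_lt_of_mem hi))
      obtain ⟨k, hk, hkm⟩ := exists_minimalFor_of_wellFoundedLT (T i) id h1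
      exact ⟨k, fun _ => ⟨hk, fun l hl hTl => absurd (hkm hTl hl.le) (not_le.2 hl)⟩⟩
    · exact ⟨⟨0, hs⟩, fun h0 => absurd h0 hi⟩
  choose f hf using hT
  rcases A.eq_empty_or_nonempty with rfl | hne
  · simp
  obtain ⟨i₀, hi₀, hmax⟩ := Finset.exists_max_image A f hne
  have hsub : A.erase i₀ ⊆ V (f i₀) := by
    intro i hi
    obtain ⟨hii, hiA⟩ := Finset.mem_erase.1 hi
    have hlt : f i < f i₀ := by
      refine lt_of_le_of_ne (hmax i hiA) fun heq => ?_
      obtain ⟨a, haA, ha⟩ := hA (f i)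
      by_cases hai : a = i
      · exact ha (heq ▸ (hf i₀ hi₀).1 a haA (hai ▸ hii))
      · exact ha ((hf i hiA).1 a haA hai)
    obtain ⟨k, hkV, hk⟩ := (h.exists_le_iff (f i₀) (w (f i))).1
      ⟨f i, hlt, le_add_of_nonneg_right zero_le⟩
    have hkA : k ∈ A ∧ k ≠ i₀ := by
      by_contra hcon
      obtain ⟨l, hl, hle⟩ := (h.exists_le_iff (f i₀) (Finsupp.single k 1)).2 ⟨k, hkV, by simp⟩
      refine (hf i₀ hi₀).2 l hl fun a haA hai => ?_
      have h1 := hle a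
      have hka : k ≠ a := by
        rintro rfl
        exact hcon ⟨haA, hai⟩
      rw [Finsupp.add_apply, Finsupp.single_eq_of_ne' hka, (hf i₀ hi₀).1 a haA hai] at h1
      omega
    have : k = i := by
      by_contra hki
      exact hk ((hf i hiA).1 k hkA.1 hki)
    exact this ▸ hkV
  have h1 := Finset.card_le_card hsub
  rw [Finset.card_erase_of_mem hi₀] at h1
  have h2 := h.card_le (f i₀)
  omega

/-- The residue field of a maximal ideal is finite over `K`, so the ideal contains a monic
polynomial in each of the variables. -/
lemma exists_monic_mem (P : Ideal (MvPolynomial (Fin n) K)) (hP : P.IsMaximal) :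
    ∃ f : Fin n → Polynomial K, (∀ k, (f k).Monic) ∧
      ∀ k, Polynomial.aeval (X k : MvPolynomial (Fin n) K) (f k) ∈ P := by
  let := Ideal.Quotient.field P
  have hfin : Module.Finite K (MvPolynomial (Fin n) K ⧸ P) :=
    finite_of_finite_type_of_isJacobsonRing _ _
  have hint : ∀ k, IsIntegral K (Ideal.Quotient.mk P (X k)) := fun k =>
    Algebra.IsIntegral.isIntegral _
  choose f hf hf0 using hint
  refine ⟨f, hf, fun k => ?_⟩
  rw [← Ideal.Quotient.eq_zero_iff_mem, ← Ideal.Quotient.mkₐ_eq_mk K, ← Polynomial.aeval_algHom_apply]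
  exact hf0 k

lemma ringDepth_le_ringKrullDim (A : Type*) [CommRing A] [IsLocalRing A] [IsNoetherianRing A] :
    (ringDepth A (IsLocalRing.maximalIdeal A) : WithBot ℕ∞) ≤ ringKrullDim A := by
  obtain ⟨d, hd⟩ : ∃ d : ℕ∞, ringKrullDim A = d :=
    ⟨_, (WithBot.coe_unbot (ringKrullDim A) ringKrullDim_ne_bot).symm⟩
  rw [hd]
  refine WithBot.coe_le_coe.2 (iSup_le fun rs => ?_)
  have h1 := ringKrullDim_add_length_eq_ringKrullDim_of_isRegular rs.1 rs.2.2
  have hnt : Nontrivial (A ⧸ Ideal.ofList rs.1) := by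
    refine Ideal.Quotient.nontrivial_iff.2 fun htop => ?_
    have := rs.2.2.top_ne_smul
    rw [htop] at this
    simp at this
  rw [hd] at h1
  have h2 : (0 : WithBot ℕ∞) ≤ ringKrullDim (A ⧸ Ideal.ofList rs.1) :=
    ringKrullDim_nonneg_of_nontrivial
  have h3 : ((rs.1.length : ℕ∞) : WithBot ℕ∞) ≤ (d : WithBot ℕ∞) := by
    rw [← h1]
    exact le_add_of_nonneg_left h2
  exact WithBot.coe_le_coe.1 h3

/-- The Koszul homology of `R/I` vanishes above degree `q + 1`, so each maximal ideal contains a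
regular sequence of length `n - q - 1`; this is also an upper bound for the dimension. -/
lemma HasLinearQuotients.isCohenMacaulayRing {w : Fin s → (Fin n →₀ ℕ)}
    {V : Fin s → Finset (Fin n)} (h : HasLinearQuotients K w V) (hn : lqIndex V + 1 ≤ n)
    (hht : ((lqIndex V + 1 : ℕ) : ℕ∞) ≤ idealHeight (initIdeal K w s)) :
    IsCohenMacaulayRing (MvPolynomial (Fin n) K ⧸ initIdeal K w s) := by
  set I := initIdeal K w s with hI
  set N := lqIndex V + 1 with hN
  intro p hp
  have hpp : p.IsPrime := hp.isPrime
  let A := Localization.AtPrime p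
  have hdim : ringKrullDim A ≤ ((n - N : ℕ) : ℕ∞) := by
    rw [IsLocalization.AtPrime.ringKrullDim_eq_height p A]
    exact WithBot.coe_le_coe.2 ((PrimeSpectrum.height_eq_orderHeight ⟨p, hpp⟩).trans_le
      (height_add_idealHeight_le I hht ⟨p, hpp⟩))
  have hle : (ringDepth A (IsLocalRing.maximalIdeal A) : WithBot ℕ∞) ≤ ringKrullDim A :=
    ringDepth_le_ringKrullDim A
  have hge : ((n - N : ℕ) : ℕ∞) ≤ ringDepth A (IsLocalRing.maximalIdeal A) := by
    let P := Ideal.comap (Ideal.Quotient.mk I) p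
    have hP : P.IsMaximal :=
      Ideal.comap_isMaximal_of_surjective _ Ideal.Quotient.mk_surjective
    obtain ⟨f, hf, hfP⟩ := exists_monic_mem P hP
    obtain ⟨rs, hlen, hrs, hreg⟩ := exists_isWeaklyRegular_of_koszulAcyclic
      (fun k => Polynomial.aeval (X k : MvPolynomial (Fin n) K) (f k)) (n - N) (Nat.sub_le n N)
      (M := MvPolynomial (Fin n) K ⧸ I) (fun i hi => h.koszulAcyclic hf le_rfl i (by omega))
    have hspan : Ideal.span (Set.range fun k =>
        Polynomial.aeval (X k : MvPolynomial (Fin n) K) (f k)) ≤ P := by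
      rw [Ideal.span_le]
      rintro _ ⟨k, rfl⟩
      exact hfP k
    have hreg' := (RingTheory.Sequence.isWeaklyRegular_map_algebraMap_iff
      (MvPolynomial (Fin n) K ⧸ I) (MvPolynomial (Fin n) K ⧸ I) rs).2 hreg
    have hmem : ∀ r ∈ rs.map (algebraMap (MvPolynomial (Fin n) K) (MvPolynomial (Fin n) K ⧸ I)),
        r ∈ p := by
      intro r hr
      obtain ⟨a, ha, rfl⟩ := List.mem_map.1 hr
      exact hspan (hrs a ha)
    have hreg2 := hreg'.isRegular_of_isLocalization_of_mem A p hmem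
    refine le_trans ?_ (le_iSup _ ⟨_, fun r hr => ?_, hreg2⟩)
    · simp [hlen]
    · obtain ⟨a, ha, rfl⟩ := List.mem_map.1 hr
      exact (IsLocalization.AtPrime.to_map_mem_maximal_iff A p a).2 (hmem a ha)
  exact le_antisymm hle (hdim.trans (WithBot.coe_le_coe.2 hge))

/-- At the origin the depth of `R/I` is at most `n - q - 1`, so a Cohen-Macaulay `R/I` has dimension
at most `n - q - 1` there. -/
lemma HasLinearQuotients.le_idealHeight {w : Fin s → (Fin n →₀ ℕ)}
    {V : Fin s → Finset (Fin n)} (h : HasLinearQuotients K w V)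
    (hmin : ∀ j k : Fin s, j ≠ k → ¬ w j ≤ w k) (hw : ∀ k, w k ≠ 0) (j : Fin s)
    (hdeg : ∀ k : Fin s, k < j → (w k).degree ≤ (w j).degree) (hne : (V j).Nonempty)
    (hCM : IsCohenMacaulayRing (MvPolynomial (Fin n) K ⧸ initIdeal K w s)) :
    (((V j).card + 1 : ℕ) : ℕ∞) ≤ idealHeight (initIdeal K w s) := by
  set I := initIdeal K w s with hI
  have hI0 : I ≤ varIdeal K Finset.univ := initIdeal_le_varIdeal_iff.2 fun k => by
    obtain ⟨i, hi⟩ := Finsupp.ne_iff.1 (hw k)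
    exact ⟨i, Finset.mem_univ i, hi⟩
  have hker : ∀ f : MvPolynomial (Fin n) K,
      constantCoeff f = 0 ↔ f ∈ varIdeal K Finset.univ := by
    intro f
    rw [mem_varIdeal]
    constructor
    · intro hf v hv
      have hv0 : v ≠ 0 := by
        rintro rfl
        exact mem_support_iff.1 hv hf
      obtain ⟨i, hi⟩ := Finsupp.ne_iff.1 hv0
      exact ⟨i, Finset.mem_univ i, hi⟩
    · intro hf
      by_contra h0
      obtain ⟨i, -, hi⟩ := hf 0 (mem_support_iff.2 h0)
      exact hi rfl
  let ε : MvPolynomial (Fin n) K ⧸ I →+* K :=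
    Ideal.Quotient.lift I constantCoeff fun a ha => (hker a).2 (hI0 ha)
  have hε : ∀ f, ε (Ideal.Quotient.mk I f) = constantCoeff f := fun f => rfl
  let p := RingHom.ker ε
  have hp : p.IsMaximal := RingHom.ker_isMaximal_of_surjective ε fun a =>
    ⟨Ideal.Quotient.mk I (C a), by rw [hε, constantCoeff_C]⟩
  have hpp : p.IsPrime := hp.isPrime
  let A := Localization.AtPrime p
  let x : Fin n → A := fun k => algebraMap _ A (Ideal.Quotient.mk I (X k))
  have hnac : ¬ KoszulAcyclic x A ((V j).card + 1) :=
    h.not_koszulAcyclic hmin j hdeg hne p (fun f hf h0 => hf h0) A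
  have hn : (V j).card + 1 ≤ n := by
    by_contra hcon
    exact hnac (koszulAcyclic_of_lt x (by omega))
  have hspan : IsLocalRing.maximalIdeal A ≤ Ideal.span (Set.range x) := by
    rw [← Localization.AtPrime.map_eq_maximalIdeal, Ideal.map_le_iff_le_comap]
    intro y hy
    obtain ⟨f, rfl⟩ := Ideal.Quotient.mk_surjective y
    have hf : f ∈ varIdeal K Finset.univ := (hker f).1 hy
    have h1 : varIdeal K Finset.univ ≤ Ideal.comap
        ((algebraMap (MvPolynomial (Fin n) K ⧸ I) A).comp (Ideal.Quotient.mk I))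
        (Ideal.span (Set.range x)) := by
      rw [varIdeal, Ideal.span_le]
      rintro _ ⟨i, -, rfl⟩
      exact Ideal.subset_span ⟨i, rfl⟩
    exact h1 hf
  have hdepth : ringDepth A (IsLocalRing.maximalIdeal A) ≤ ((n - ((V j).card + 1) : ℕ) : ℕ∞) := by
    refine iSup_le fun rs => ?_
    by_contra hcon
    rw [Nat.cast_le, not_le] at hcon
    exact hnac (koszulAcyclic_of_isWeaklyRegular x rs.1 (fun r hr => hspan (rs.2.1 r hr))
      rs.2.2.toIsWeaklyRegular _ (by omega))
  refine _root_.le_idealHeight fun B hB => ?_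
  have h1 := sub_card_le_height hB ⟨p, hpp⟩ fun i => by
    change ε (Ideal.Quotient.mk I (X i)) = 0
    rw [hε, constantCoeff_X]
  have h2 : (ringDepth A (IsLocalRing.maximalIdeal A) : WithBot ℕ∞) = Order.height
      (⟨p, hpp⟩ : PrimeSpectrum (MvPolynomial (Fin n) K ⧸ I)) := by
    rw [← PrimeSpectrum.height_eq_orderHeight,
      ← IsLocalization.AtPrime.ringKrullDim_eq_height p A]
    exact hCM p hp
  rw [← WithBot.coe_inj.1 h2] at h1
  have h3 := h1.trans hdepth
  norm_cast at h3
  omega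

end Main

/-- Let `I` be a monomial ideal of `R = K[x_1, …, x_n]` having linear
quotients (witnessed by the ordering `w` of its minimal monomial generators, with
nondecreasing degrees, and the variable sets `V` generating the successive colon ideals).
Then `ht(I) ≤ q(I) + 1`, and `R/I` is Cohen–Macaulay iff `ht(I) = q(I) + 1`. -/
theorem statement0 {K : Type*} [Field K] {n s : ℕ} (hs : 2 ≤ s)
    (I : Ideal (MvPolynomial (Fin n) K))
    (w : Fin s → (Fin n →₀ ℕ))
    (hI : I = Ideal.span
      (Set.range fun j => (monomial (w j) (1 : K) : MvPolynomial (Fin n) K)))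
    (hmin : ∀ j k : Fin s, j ≠ k → ¬ w j ≤ w k)
    (hdeg : Monotone fun j : Fin s => (w j).sum fun _ e => e)
    (V : Fin s → Finset (Fin n))
    (hV : ∀ j : Fin s,
      (Ideal.span ((fun k => (monomial (w k) (1 : K) : MvPolynomial (Fin n) K)) ''
          {k : Fin s | k < j})).colon
        (Ideal.span {(monomial (w j) (1 : K) : MvPolynomial (Fin n) K)})
      = varIdeal K (V j)) :
    idealHeight I ≤ ((lqIndex V + 1 : ℕ) : ℕ∞) ∧
    (IsCohenMacaulayRing (MvPolynomial (Fin n) K ⧸ I) ↔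
      idealHeight I = ((lqIndex V + 1 : ℕ) : ℕ∞)) := by
  have h : HasLinearQuotients K w V := by
    intro j g
    rw [← hV j, Submodule.mem_colon_span_singleton, smul_eq_mul]
    rfl
  have hIw : I = initIdeal K w s := by
    rw [hI, initIdeal, ← Set.image_univ]
    congr 2
    ext k
    simp
  subst hIw
  let k₀ : Fin s := ⟨0, by omega⟩
  let k₁ : Fin s := ⟨1, by omega⟩
  have h01 : k₀ ≠ k₁ := fun h0 => absurd (congrArg Fin.val h0) Nat.zero_ne_one
  have hw : ∀ k, w k ≠ 0 := fun k hk => by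
    by_cases h0 : k = k₀
    · exact hmin k k₁ (h0 ▸ h01) (hk ▸ zero_le)
    · exact hmin k k₀ h0 (hk ▸ zero_le)
  -- `w k₀` divides `w k₀ * w k₁`, so the colon ideal at the second generator is not zero
  have hV1 : 0 < (V k₁).card := by
    obtain ⟨i, hi, -⟩ := (h.exists_le_iff k₁ (w k₀)).1
      ⟨k₀, Nat.zero_lt_one, le_add_of_nonneg_right zero_le⟩
    exact Finset.card_pos.2 ⟨i, hi⟩
  obtain ⟨j, hj⟩ : ∃ j, lqIndex V = (V j).card := by
    obtain ⟨j, -, hj⟩ := Finset.exists_mem_eq_sup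
      (Finset.univ.filter fun j : Fin s => (j : ℕ) ≠ 0) ⟨k₁, by simp [k₁]⟩ (fun j => (V j).card)
    exact ⟨j, hj⟩
  have hne : (V j).Nonempty :=
    Finset.card_pos.1 (hj ▸ hV1.trans_le (h.card_le k₁))
  have hdeg' : ∀ k : Fin s, k < j → (w k).degree ≤ (w j).degree := fun k hk => hdeg hk.le
  obtain ⟨A, hA, hAc⟩ := h.exists_cover (by omega) hw
  have hle : idealHeight (initIdeal K w s) ≤ ((lqIndex V + 1 : ℕ) : ℕ∞) :=
    (idealHeight_le hA).trans (by exact_mod_cast hAc)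
  refine ⟨hle, fun hCM => le_antisymm hle ?_, fun hht => h.isCohenMacaulayRing ?_ hht.ge⟩
  · rw [hj]
    exact h.le_idealHeight hmin hw j hdeg' hne hCM
  · have h1 := hht.symm.trans_le (idealHeight_le hA)
    have h2 : A.card ≤ n := by simpa using Finset.card_le_univ A
    rw [Nat.cast_le] at h1
    omega
end

section
/- Let I be a matroidal ideal of degree d in the polynomial ring R = K[x_1, ..., x_n] with supp(I) = {x_1, ..., x_n}. Then q(I) = n − d. -/
/-!
Each colon ideal `⟨u_0, …, u_{j-1}⟩ : u_j` contains no variable of `u_j`, because distinct bases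
of the same size are incomparable; hence `V j` lies in the complement of `u j`, and
`(V j).card ≤ n - d`.  Equality holds at the last index: given `i ∉ u j`, full support provides a
basis containing `i`, and the exchange property moves it inside `insert i (u j)`
(`exists_subset_insert`).  This basis precedes `u j`, so `X i` lies in the last colon ideal and
`V j` is the whole complement.  If there is only one basis, it is the full set of variables and
both sides are `0`.

Non-membership in an ideal spanned by monomials is shown by evaluating at the indicator vector of
a set of variables.
-/

open MvPolynomial

/-- A square-free monomial takes the value `1` or `0` at the indicator vector of `T`, according to
whether its support lies in `T`. -/
lemma eval_indicator_sqMon {K : Type*} [Field K] {n : ℕ} (S T : Finset (Fin n)) :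
    eval (fun i => if i ∈ T then (1 : K) else 0) (sqMon K S) = if S ⊆ T then 1 else 0 := by
  rw [sqMon, map_prod]
  simp only [eval_X]
  split_ifs with h
  · exact Finset.prod_eq_one fun i hi => by simp [h hi]
  · obtain ⟨i, hi, hiT⟩ := Finset.not_subset.1 h
    exact Finset.prod_eq_zero hi (by simp [hiT])

lemma eval_eq_zero_of_mem_span {K : Type*} [Field K] {n : ℕ} {A : Set (MvPolynomial (Fin n) K)}
    {f : MvPolynomial (Fin n) K} (a : Fin n → K) (hA : ∀ g ∈ A, eval a g = 0)
    (hf : f ∈ Ideal.span A) : eval a f = 0 := by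
  have h : Ideal.span A ≤ RingHom.ker (eval a) := Ideal.span_le.2 fun g hg => hA g hg
  exact h hf

lemma mem_of_X_mem_span {K : Type*} [Field K] {n : ℕ} {W : Finset (Fin n)} {i : Fin n}
    (h : (X i : MvPolynomial (Fin n) K) ∈
      Ideal.span ((fun i => (X i : MvPolynomial (Fin n) K)) '' (W : Set (Fin n)))) : i ∈ W := by
  by_contra hi
  have := eval_eq_zero_of_mem_span (fun k => if k ∈ ({i} : Finset (Fin n)) then (1 : K) else 0)
    (by
      rintro _ ⟨k, hk, rfl⟩
      have hki : k ≠ i := fun e => hi (e ▸ hk)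
      simp [hki]) h
  simp at this

/-- The dual exchange property: a non-loop `i` can be exchanged into the basis `u`. -/
lemma exists_subset_insert {n : ℕ} {B : Finset (Finset (Fin n))} (hB : ExchangeProp B)
    (hsupp : FullSupport B) {u : Finset (Fin n)} (hu : u ∈ B) (i : Fin n) :
    ∃ v ∈ B, i ∈ v ∧ v ⊆ insert i u := by
  obtain ⟨w, hw, hiw⟩ := hsupp i
  -- Among the bases containing `i`, one closest to `u` works.
  obtain ⟨v, hv, hmin⟩ := (B.filter (i ∈ ·)).exists_min_image (fun v => (v \ u).card)
    ⟨w, by simp [hw, hiw]⟩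
  simp only [Finset.mem_filter] at hv hmin
  refine ⟨v, hv.1, hv.2, fun a ha => ?_⟩
  by_contra hau
  simp only [Finset.mem_insert, not_or] at hau
  obtain ⟨b, hbu, hbv, hb⟩ := hB v hv.1 u hu a ha hau.2
  have hle := hmin _ ⟨hb, by simp [hv.2, Ne.symm hau.1]⟩
  have hlt : (insert b (v.erase a) \ u).card < (v \ u).card := by
    apply Finset.card_lt_card
    refine ⟨fun x hx => ?_, fun h => ?_⟩
    · simp only [Finset.mem_sdiff, Finset.mem_insert, Finset.mem_erase] at hx ⊢
      grind
    · have := h (Finset.mem_sdiff.2 ⟨ha, hau.2⟩)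
      simp only [Finset.mem_sdiff, Finset.mem_insert, Finset.mem_erase] at this
      grind
  omega

/-- Let `I` be a matroidal ideal of degree `d` in `K[x_1, …, x_n]` with
`supp(I) = {x_1, …, x_n}`.  Then `q(I) = n − d` (for any ordering of `G(I)` giving
linear quotients). -/
theorem statement3 {K : Type*} [Field K] {n d s : ℕ}
    {I : Ideal (MvPolynomial (Fin n) K)} {B : Finset (Finset (Fin n))}
    (hI : IsMatroidal K I B d) (hsupp : FullSupport B)
    (u : Fin s → Finset (Fin n)) (hu : Function.Injective u)
    (huB : Set.range u = (B : Set (Finset (Fin n))))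
    (V : Fin s → Finset (Fin n)) (hV : LinearQuotientWitness K u V) :
    lqIndex V = n - d := by
  obtain ⟨hne, hcard, hex, -⟩ := hI
  have huB' (j : Fin s) : u j ∈ B := by
    have h : u j ∈ Set.range u := ⟨j, rfl⟩
    rwa [huB] at h
  have hcompl (j : Fin s) : (u j)ᶜ.card = n - d := by
    rw [Finset.card_compl, Fintype.card_fin, hcard _ (huB' j)]
  have hmem (j : Fin s) (i : Fin n) : i ∈ V j ↔ (X i : MvPolynomial (Fin n) K) * sqMon K (u j) ∈
      Ideal.span (sqMon K '' (u '' {k | k < j})) := by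
    rw [← smul_eq_mul, ← Submodule.mem_colon_singleton, ← Submodule.colon_span (S := {_})]
    have h := hV j
    constructor
    · intro hi
      refine h.ge ?_
      exact Ideal.subset_span ⟨i, hi, rfl⟩
    · intro hi
      exact mem_of_X_mem_span (h.le hi)
  have hsub (j : Fin s) : V j ⊆ (u j)ᶜ := by
    intro i hi
    rw [Finset.mem_compl]
    intro hij
    -- Earlier generators vanish at the indicator vector of `u j`, whereas `X i * u_j` does not.
    have h0 := eval_eq_zero_of_mem_span (fun k => if k ∈ u j then (1 : K) else 0) (by
      rintro _ ⟨_, ⟨k, hk, rfl⟩, rfl⟩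
      rw [eval_indicator_sqMon, if_neg]
      intro hkj
      refine (ne_of_lt hk) (hu (Finset.eq_of_subset_of_card_le hkj ?_))
      rw [hcard _ (huB' j), hcard _ (huB' k)]) ((hmem j i).1 hi)
    rw [map_mul, eval_indicator_sqMon] at h0
    simp [hij] at h0
  have hs : 0 < s := by
    by_contra h
    obtain rfl : s = 0 := by omega
    obtain ⟨S, hS⟩ := hne
    have h : S ∈ Set.range u := by rw [huB]; exact hS
    exact h.choose.elim0
  let l : Fin s := ⟨s - 1, by omega⟩
  have hlast : V l = (u l)ᶜ := by
    refine (hsub l).antisymm fun i hi => (hmem l i).2 ?_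
    rw [Finset.mem_compl] at hi
    obtain ⟨v, hv, hiv, hvu⟩ := exists_subset_insert hex hsupp (huB' l) i
    have h : v ∈ Set.range u := by rw [huB]; exact hv
    obtain ⟨k, rfl⟩ := h
    have hkl : k < l := by
      have hkne : k ≠ l := fun e => hi (e ▸ hiv)
      have hne' : (k : ℕ) ≠ s - 1 := fun e => hkne (Fin.ext e)
      have := k.isLt
      exact Fin.lt_def.2 (show (k : ℕ) < s - 1 by omega)
    have hdvd : sqMon K (u k) ∣ X i * sqMon K (u l) := by
      rw [sqMon, sqMon, ← Finset.prod_insert hi]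
      exact Finset.prod_dvd_prod_of_subset _ _ _ hvu
    exact Ideal.mem_of_dvd _ hdvd (Ideal.subset_span ⟨_, ⟨k, hkl, rfl⟩, rfl⟩)
  refine le_antisymm (Finset.sup_le fun j _ => (hcompl j) ▸ Finset.card_le_card (hsub j)) ?_
  rw [← hcompl l, ← hlast]
  by_cases hl : (l : ℕ) = 0
  · -- With a single generator no colon ideal is counted, and `V l` is empty as nothing precedes.
    have hV0 : V l = ∅ := by
      refine Finset.eq_empty_of_forall_notMem fun i hi => ?_
      have h := (hmem l i).1 hi
      have he : {k : Fin s | k < l} = ∅ := by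
        ext k
        simp [Fin.lt_def, hl]
      rw [he] at h
      simp [sqMon, Finset.prod_eq_zero_iff] at h
    simp [hV0]
  · exact Finset.le_sup (f := fun j => (V j).card) (by simpa using hl)
end

section
/- Let I be a matroidal ideal of degree d in R = K[x_1, ..., x_n] with supp(I) = {x_1, ..., x_n}, and let u_1, ..., u_s be an ordering of G(I) giving linear quotients. Then for each 2 ≤ j ≤ s the colon ideal ⟨u_1, ..., u_{j−1}⟩ : u_j is generated by a subset of {x_1, ..., x_n} ∖ supp(u_j), and moreover ⟨u_1, ..., u_{s−1}⟩ : u_s equals the ideal generated by the full set {x_1, ..., x_n} ∖ supp(u_s). -/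
/-!
Two facts about the family `B` of supports carry the proof.

If a variable `x_i` with `i ∈ T = u_j` lay in the colon ideal, then `x_i · x^T` would lie in the ideal
generated by the earlier monomials. Evaluating at the indicator vector of `T` turns `x_i · x^T` into
`1`, while every earlier generator `x^S` becomes `0`, since `S` and `T` are distinct and of equal size
(`X_mul_sqMon_notMem`). So the generating variables of every colon ideal avoid `u_j`.

Conversely, if `i ∉ T` for the last support `T`, some `S ∈ B` satisfies `i ∈ S ⊆ T ∪ {i}`
(`exists_mem_subset_insert`). As `S ≠ T` it occurs earlier in the ordering, and `x^S` divides
`x_i · x^T`.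
-/

open MvPolynomial

theorem sqMon_dvd_sqMon {n : ℕ} {K : Type*} [Field K] {S T : Finset (Fin n)} (h : S ⊆ T) :
    sqMon K S ∣ sqMon K T :=
  Finset.prod_dvd_prod_of_subset _ _ _ h

/-- The variable `x_i` with `i ∈ T` does not multiply `x^T` into the ideal generated by square-free
monomials none of which divides `x^T`. -/
theorem X_mul_sqMon_notMem {n : ℕ} {K : Type*} [Field K] {A : Set (Finset (Fin n))}
    {T : Finset (Fin n)} {i : Fin n} (hi : i ∈ T) (hA : ∀ S ∈ A, ¬ S ⊆ T) :
    X i * sqMon K T ∉ Ideal.span (sqMon K '' A) := by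
  intro h
  -- the evaluation at the indicator vector of `T` kills the ideal but not `x_i · x^T`
  let φ : MvPolynomial (Fin n) K →+* K := eval fun l => if l ∈ T then 1 else 0
  have hle : Ideal.span (sqMon K '' A) ≤ RingHom.ker φ := by
    rw [Ideal.span_le]
    rintro _ ⟨S, hS, rfl⟩
    obtain ⟨l, hlS, hlT⟩ := Finset.not_subset.1 (hA S hS)
    rw [SetLike.mem_coe, RingHom.mem_ker, sqMon, map_prod]
    exact Finset.prod_eq_zero hlS (by simp [φ, hlT])
  have h0 : φ (X i * sqMon K T) = 0 := hle h
  have h1 : φ (sqMon K T) = 1 := by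
    rw [sqMon, map_prod]
    exact Finset.prod_eq_one fun l hl => by simp [φ, hl]
  rw [map_mul, h1] at h0
  simp [φ, hi] at h0

/-- A weak form of the dual exchange property: every element `i` of the support of the matroid lies
in a basis contained in `T ∪ {i}`. Such a basis is one through `i` that meets `T` in as many elements
as possible. -/
theorem exists_mem_subset_insert {n : ℕ} {B : Finset (Finset (Fin n))} (hB : ExchangeProp B)
    {T : Finset (Fin n)} (hT : T ∈ B) {i : Fin n} (hi : ∃ S ∈ B, i ∈ S) :
    ∃ S ∈ B, i ∈ S ∧ S ⊆ insert i T := by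
  obtain ⟨S₀, hS₀, hiS₀⟩ := hi
  obtain ⟨S, hS, hmax⟩ := (B.filter fun S => i ∈ S).exists_max_image (fun S => (S ∩ T).card)
    ⟨S₀, by simp [hS₀, hiS₀]⟩
  rw [Finset.mem_filter] at hS
  refine ⟨S, hS.1, hS.2, fun l hl => ?_⟩
  by_contra hlT
  rw [Finset.mem_insert, not_or] at hlT
  -- exchanging `l ∉ T` for some `j ∈ T` keeps `i` and enlarges the intersection with `T`
  obtain ⟨j, hjT, hjS, hex⟩ := hB S hS.1 T hT l hl hlT.2
  have hle := hmax (insert j (S.erase l)) (by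
    simp only [Finset.mem_filter, Finset.mem_insert, Finset.mem_erase]
    exact ⟨hex, Or.inr ⟨fun h => hlT.1 h.symm, hS.2⟩⟩)
  have hlt : (S ∩ T).card < (insert j (S.erase l) ∩ T).card := by
    refine Finset.card_lt_card (Finset.ssubset_iff.2 ⟨j, by simp [hjS], fun x hx => ?_⟩)
    simp only [Finset.mem_insert, Finset.mem_inter, Finset.mem_erase] at hx ⊢
    grind
  omega

/-- Let `I` be a matroidal ideal of degree `d` with full support, and let
`u_0, …, u_m` be an ordering of `G(I)` giving linear quotients (with colon ideals generated
by the variable sets `V j`).  Then for each `j ≥ 1` the colon ideal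
`⟨u_0, …, u_{j−1}⟩ : u_j` is generated by a subset of `{x_1, …, x_n} ∖ supp(u_j)`, and the
last colon ideal `⟨u_0, …, u_{m−1}⟩ : u_m` equals the ideal generated by the full set
`{x_1, …, x_n} ∖ supp(u_m)`. -/
theorem statement4 {K : Type*} [Field K] {n d m : ℕ}
    {I : Ideal (MvPolynomial (Fin n) K)} {B : Finset (Finset (Fin n))}
    (hI : IsMatroidal K I B d) (hsupp : FullSupport B)
    (u : Fin (m + 1) → Finset (Fin n)) (hu : Function.Injective u)
    (huB : Set.range u = (B : Set (Finset (Fin n))))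
    (V : Fin (m + 1) → Finset (Fin n)) (hV : LinearQuotientWitness K u V) :
    (∀ j : Fin (m + 1), (j : ℕ) ≠ 0 → ∀ i ∈ V j, i ∉ u j) ∧
    (Ideal.span (sqMon K '' (u '' {k : Fin (m + 1) | k < Fin.last m}))).colon
        (Ideal.span {sqMon K (u (Fin.last m))})
      = varIdeal K (Finset.univ \ u (Fin.last m)) := by
  obtain ⟨-, hcard, hex, -⟩ := hI
  have hmem : ∀ k, u k ∈ B := fun k => by
    have : u k ∈ Set.range u := ⟨k, rfl⟩
    rwa [huB] at this
  have hnot : ∀ j, ∀ i ∈ V j, i ∉ u j := by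
    intro j i hi hij
    have hX : (X i : MvPolynomial (Fin n) K) ∈
        (Ideal.span (sqMon K '' (u '' {k | k < j}))).colon (Ideal.span {sqMon K (u j)}) := by
      rw [hV j]
      exact Ideal.subset_span ⟨i, hi, rfl⟩
    refine X_mul_sqMon_notMem hij ?_
      (Submodule.mem_colon.1 hX _ (Ideal.mem_span_singleton_self _))
    rintro _ ⟨k, hk, rfl⟩ hsub
    have heq : u k = u j :=
      Finset.eq_of_subset_of_card_le hsub (by rw [hcard _ (hmem k), hcard _ (hmem j)])
    exact (ne_of_lt hk) (hu heq)
  refine ⟨fun j _ => hnot j, le_antisymm ?_ ?_⟩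
  · rw [hV, varIdeal]
    refine Ideal.span_mono (Set.image_mono fun i hi => ?_)
    simpa using hnot _ i hi
  · rw [varIdeal, Ideal.span_le]
    rintro _ ⟨i, hi, rfl⟩
    have hiT : i ∉ u (Fin.last m) := by simpa using hi
    obtain ⟨S, hS, hiS, hsub⟩ := exists_mem_subset_insert hex (hmem (Fin.last m)) (hsupp i)
    obtain ⟨k, rfl⟩ : S ∈ Set.range u := by rw [huB]; exact hS
    have hk : k < Fin.last m := lt_of_le_of_ne (Fin.le_last k) fun h => hiT (h ▸ hiS)
    have hgen : X i * sqMon K (u (Fin.last m)) ∈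
        Ideal.span (sqMon K '' (u '' {k : Fin (m + 1) | k < Fin.last m})) := by
      refine Ideal.mem_of_dvd _ ?_ (Ideal.subset_span ⟨u k, ⟨k, hk, rfl⟩, rfl⟩)
      have := sqMon_dvd_sqMon (K := K) hsub
      rwa [sqMon, sqMon, Finset.prod_insert hiT] at this
    refine Submodule.mem_colon.2 fun p hp => ?_
    obtain ⟨q, rfl⟩ := Ideal.mem_span_singleton.1 hp
    rw [smul_eq_mul, ← mul_assoc]
    exact Ideal.mul_mem_right _ _ hgen
end

section
/- Let I be a matroidal ideal of degree d in the polynomial ring R = K[x_1, ..., x_n] with supp(I) = {x_1, ..., x_n}. Then the projective dimension of I as an R-module is pd_R(I) = n − d. -/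
/-!
The family `B` is the set of bases of a matroid, and full support says that this matroid has no
loops. The projective dimension is found by induction on the size of the ground set `E`, proving
that a loopless matroid of rank `d` on `E` gives an ideal `I` of projective dimension `|E| - d`.
The statement carried through the induction is `ExactPD`: the projective dimension is at most
`j`, and `Ext^j(I, k) ≠ 0` for the residue field `k` at the origin. Working with a fixed module
`k` annihilated by the variables is what makes lower bounds pass along short exact sequences.

For `d > 0` pick an element `y` of the ground set and let `P` be its parallel class, of size
`p ≥ 1`. Let `A` be the ideal of the contraction `B / y` without the remaining elements of `P`
(rank `d - 1` on `E \ P`), and let `C` be the ideal generated by the bases that avoid `P`: it is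
zero or the ideal of a loopless matroid of rank `d` on `E \ P`. Since parallel elements are
interchangeable, `I = C + ∑_{x ∈ P} x A`, and moreover `C ≤ A` and `I ≤ A`. By induction `A` has
projective dimension exactly `|E| - p - d + 1` and `C` has a smaller one, so `A / C` has the same
exact projective dimension as `A`. If `D` is the sum of `C` and some of the `x A`, and `x ∈ P` is
a further element, then `x` is regular on `A / D` with quotient `A / (D + x A)`, because the
generators of `D` do not involve `x`. Each such step raises the projective dimension by
exactly one, as multiplication by `x` is zero on `Ext(-, k)`. After `p` steps `A / I` has
projective dimension exactly `|E| - d + 1`, and since `A` has projective dimension at most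
`|E| - d`, the sequence `0 → I → A → A / I → 0` gives the value `|E| - d` for `I`.

The lemmas carrying this are `exactPD_quotient`, `exactPD_smul` and `exactPD_sub` on the
homological side, `ExchangeProp.exists_insert_erase` (the dual exchange property) on the
combinatorial side, `basisIdeal_restr_insert` relating the two, and `exactPD_basisIdeal`, the
induction. `hasProjDimLE_of_hasProjectiveDimensionLE` and `ext_eq_zero_of_hasProjDimLE` translate
between vanishing of `Ext` and the existence of short projective resolutions.
-/

open MvPolynomial

/-! ### Projective resolutions and projective dimension -/

section Resolutions

universe u

open CategoryTheory CategoryTheory.Limits CategoryTheory.Abelian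

lemma ext_eq_zero_of_hasProjDimLE {A : Type*} [CommRing A] {M N : ModuleCat A} {k : ℕ}
    (h : HasProjDimLE M k) {j : ℕ} (hj : k < j) (e : Ext M N j) : e = 0 := by
  obtain ⟨P, hP⟩ := h
  obtain ⟨f, hf, rfl⟩ := P.extMk_surjective e (j + 1) rfl
  obtain rfl : f = 0 := (hP j hj).eq_of_src _ _
  exact P.extMk_zero _ rfl

/-- A projective resolution `⋯ → P₁ → P₀ → M` is exact at `P₀`. -/
lemma exact_zero_resolution {A : Type*} [CommRing A] {M : ModuleCat A}
    (P : ProjectiveResolution M) :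
    (ShortComplex.mk (P.complex.d 1 0) (P.π.f 0 ) P.complex_d_comp_π_f_zero).Exact :=
  ShortComplex.exact_of_g_is_cokernel _ P.isColimitCokernelCofork

/-- Splicing a projective resolution of `S.X₁` with the projective module `S.X₂` gives a
resolution of `S.X₃` that is longer by one. -/
lemma hasProjDimLE_succ {A : Type*} [CommRing A] {S : ShortComplex (ModuleCat A)}
    (hS : S.ShortExact) [Projective S.X₂] {k : ℕ} (h : HasProjDimLE S.X₁ k) :
    HasProjDimLE S.X₃ (k + 1) := by
  obtain ⟨P, hP⟩ := h
  have := hS.mono_f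
  have := hS.epi_g
  -- The spliced complex is `⋯ → P₁ → P₀ → S.X₂`, where `P₀ → S.X₂` is the augmentation
  -- followed by the inclusion `S.f`.
  let ε : P.complex.X 0 ⟶ S.X₁ := P.π.f 0
  have hdε : P.complex.d 1 0 ≫ ε = 0 := P.complex_d_comp_π_f_zero
  have : Epi ε := inferInstanceAs (Epi (P.π.f 0))
  have hex : (ShortComplex.mk (P.complex.d 1 0) ε hdε).Exact := exact_zero_resolution P
  have w : P.complex.d 1 0 ≫ (ε ≫ S.f) = 0 := by
    rw [← Category.assoc, hdε, zero_comp]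
  have hw0 : (ε ≫ S.f) ≫ S.g = 0 := by simp
  have hex1 : (ShortComplex.mk (P.complex.d 1 0) (ε ≫ S.f) w).Exact := by
    let φ : ShortComplex.mk (P.complex.d 1 0) ε hdε ⟶
        ShortComplex.mk (P.complex.d 1 0) (ε ≫ S.f) w :=
      { τ₁ := 𝟙 _, τ₂ := 𝟙 _, τ₃ := S.f }
    have : Epi φ.τ₁ := inferInstanceAs (Epi (𝟙 _))
    have : IsIso φ.τ₂ := inferInstanceAs (IsIso (𝟙 _))
    have : Mono φ.τ₃ := inferInstanceAs (Mono S.f)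
    exact (ShortComplex.exact_iff_of_epi_of_isIso_of_mono φ).1 hex
  have hex0 : (ShortComplex.mk (ε ≫ S.f) S.g hw0).Exact := by
    let φ : ShortComplex.mk (ε ≫ S.f) S.g hw0 ⟶ S :=
      { τ₁ := ε, τ₂ := 𝟙 _, τ₃ := 𝟙 _ }
    have : Epi φ.τ₁ := inferInstanceAs (Epi ε)
    have : IsIso φ.τ₂ := inferInstanceAs (IsIso (𝟙 _))
    have : Mono φ.τ₃ := inferInstanceAs (Mono (𝟙 _))
    exact (ShortComplex.exact_iff_of_epi_of_isIso_of_mono φ).2 hS.exact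
  refine ⟨{
    complex := P.complex.augment (ε ≫ S.f) w
    projective := fun n => by
      cases n with
      | zero => exact inferInstanceAs (Projective S.X₂)
      | succ n => exact P.projective n
    π := (ChainComplex.toSingle₀Equiv _ _).symm ⟨S.g, hw0⟩
    quasiIso := ⟨fun n => ?_⟩ }, fun i hi => ?_⟩
  · rcases n with _ | _ | n
    · rw [ChainComplex.quasiIsoAt₀_iff, ShortComplex.quasiIso_iff_of_zeros']
      · refine (ShortComplex.exact_and_epi_g_iff_of_iso ?_).2 ⟨hex0, hS.epi_g⟩
        exact ShortComplex.isoMk (Iso.refl _) (Iso.refl _) (Iso.refl _)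
          ((Category.id_comp _).trans (Category.comp_id _).symm)
          ((Category.id_comp _).trans (Category.comp_id _).symm)
      all_goals rfl
    · rw [quasiIsoAt_iff_exactAt']
      · rw [HomologicalComplex.exactAt_iff' _ 2 1 0 (by simp) (by simp)]
        exact hex1
      · apply ChainComplex.exactAt_succ_single_obj
    · rw [quasiIsoAt_iff_exactAt']
      · rw [HomologicalComplex.exactAt_iff' _ (n + 3) (n + 2) (n + 1) (by simp) (by simp)]
        exact P.exact_succ n
      · apply ChainComplex.exactAt_succ_single_obj
  · obtain ⟨i, rfl⟩ : ∃ j, i = j + 1 := ⟨i - 1, by omega⟩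
    exact hP i (by omega)

/-- Dimension shifting along a projective presentation reduces to projective modules, which
resolve themselves. -/
lemma hasProjDimLE_of_hasProjectiveDimensionLE {A : Type u} [CommRing A] (k : ℕ) :
    ∀ (M : ModuleCat.{u} A), HasProjectiveDimensionLE M k → HasProjDimLE M k := by
  induction k with
  | zero =>
    intro M hM
    have : Projective M := (projective_iff_hasProjectiveDimensionLE_zero M).2 hM
    refine ⟨ProjectiveResolution.self M, fun i hi => ?_⟩
    exact HomologicalComplex.isZero_single_obj_X _ _ _ _ (by omega)
  | succ k ih =>
    intro M hM
    have hS := M.shortExact_projectiveShortComplex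
    exact hasProjDimLE_succ hS (ih _ ((hS.hasProjectiveDimensionLT_X₃_iff k inferInstance).1 hM))

end Resolutions

/-! ### Projective dimension detected by a test module -/

section ExactDimension

universe u

open CategoryTheory CategoryTheory.Abelian

variable {A : Type u} [CommRing A]

/-- The module `M` has projective dimension `j`, and this is detected by the test module `k`:
the projective dimension is at most `j` and `Ext^j(M, k)` is nonzero. In the application `k` is
the residue field at the origin, as a module over the polynomial ring. -/
def ExactPD (k M : Type u) [AddCommGroup k] [Module A k] [AddCommGroup M] [Module A M]
    (j : ℕ) : Prop :=
  HasProjectiveDimensionLE (ModuleCat.of A M) j ∧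
    ∃ e : Ext (ModuleCat.of A M) (ModuleCat.of A k) j, e ≠ 0

variable {k M₁ M₂ M₃ : Type u} [AddCommGroup k] [Module A k] [AddCommGroup M₁] [Module A M₁]
  [AddCommGroup M₂] [Module A M₂] [AddCommGroup M₃] [Module A M₃]

lemma shortExact_of_exact (f : M₁ →ₗ[A] M₂) (g : M₂ →ₗ[A] M₃) (hf : Function.Injective f)
    (hg : Function.Surjective g) (hfg : Function.Exact f g) :
    (ModuleCat.shortComplexOfCompEqZero f g hfg.linearMap_comp_eq_zero).ShortExact :=
  ModuleCat.shortComplex_shortExact _ hfg hf hg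

/-- In a short exact sequence `0 → M₁ → M₂ → M₃ → 0` with `Ext^j(M₁, k) = 0`, the map
`Ext^j(M₃, k) → Ext^j(M₂, k)` is onto. -/
lemma exactPD_quotient (f : M₁ →ₗ[A] M₂) (g : M₂ →ₗ[A] M₃) (hf : Function.Injective f)
    (hg : Function.Surjective g) (hfg : Function.Exact f g) {j : ℕ}
    (h₁ : HasProjectiveDimensionLT (ModuleCat.of A M₁) j) (h₂ : ExactPD (A := A) k M₂ j) :
    ExactPD (A := A) k M₃ j := by
  have hS := shortExact_of_exact f g hf hg hfg
  obtain ⟨h, e, he⟩ := h₂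
  refine ⟨hS.hasProjectiveDimensionLT_X₃ j h₁ h, ?_⟩
  obtain ⟨e', he'⟩ := Ext.contravariant_sequence_exact₂ hS _ e
    (Ext.eq_zero_of_hasProjectiveDimensionLT _ j le_rfl)
  refine ⟨e', ?_⟩
  rintro rfl
  exact he (by rw [← he', Ext.comp_zero])

/-- In a short exact sequence `0 → M₁ → M₂ → M₃ → 0` with `Ext^(j+1)(M₂, k) = 0`, the
connecting map `Ext^j(M₁, k) → Ext^(j+1)(M₃, k)` is onto. -/
lemma exactPD_sub (f : M₁ →ₗ[A] M₂) (g : M₂ →ₗ[A] M₃) (hf : Function.Injective f)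
    (hg : Function.Surjective g) (hfg : Function.Exact f g) {j : ℕ}
    (h₂ : HasProjectiveDimensionLE (ModuleCat.of A M₂) j) (h₃ : ExactPD (A := A) k M₃ (j + 1)) :
    ExactPD (A := A) k M₁ j := by
  have hS := shortExact_of_exact f g hf hg hfg
  obtain ⟨h, e, he⟩ := h₃
  refine ⟨hS.hasProjectiveDimensionLT_X₁ (j + 1) h₂ h, ?_⟩
  obtain ⟨e', he'⟩ := Ext.contravariant_sequence_exact₃ hS _ e
    (Ext.eq_zero_of_hasProjectiveDimensionLT _ (j + 1) le_rfl) (add_comm 1 j)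
  refine ⟨e', ?_⟩
  rintro rfl
  exact he (by rw [← he', Ext.comp_zero])

/-- Passing to the quotient by an `M₁`-regular element `x` that annihilates `k` raises the
dimension by one: `x` acts as zero on `Ext^j(M₁, k)`, so the connecting map
`Ext^j(M₁, k) → Ext^(j+1)(M₃, k)` is injective. -/
lemma exactPD_smul (x : A) (hx : ∀ c : k, x • c = 0) (g : M₁ →ₗ[A] M₃)
    (hf : Function.Injective (LinearMap.lsmul A M₁ x))
    (hg : Function.Surjective g) (hfg : Function.Exact (LinearMap.lsmul A M₁ x) g) {j : ℕ}
    (h : ExactPD (A := A) k M₁ j) :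
    ExactPD (A := A) k M₃ (j + 1) := by
  have hS := shortExact_of_exact _ g hf hg hfg
  obtain ⟨h, e, he⟩ := h
  refine ⟨hS.hasProjectiveDimensionLT_X₃ (j + 1) h (hasProjectiveDimensionLT_of_ge _ (j + 1) _
    (by omega)), hS.extClass.comp e (add_comm 1 j), fun h0 => ?_⟩
  obtain ⟨e', he'⟩ := Ext.contravariant_sequence_exact₁ hS _ e (add_comm 1 j) h0
  apply he
  rw [← he']
  have h2 : x • 𝟙 (ModuleCat.of A k) = 0 := by
    ext c
    exact hx c
  -- The class `e` is the pullback of another class along multiplication by `x`, hence zero because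
  -- `x` acts as zero on `k`.
  have h3 : (Ext.mk₀ (x • 𝟙 (ModuleCat.of A M₁))).comp e' (zero_add j) = 0 := by
    rw [Ext.mk₀_smul, Ext.smul_comp, Ext.mk₀_id_comp]
    have : x • e'.comp (Ext.mk₀ (𝟙 (ModuleCat.of A k))) (add_zero j) = 0 := by
      rw [← Ext.comp_smul, ← Ext.mk₀_smul, h2, Ext.mk₀_zero, Ext.comp_zero]
    rwa [Ext.comp_mk₀_id] at this
  exact h3

lemma exactPD_self (f : A →ₗ[A] k) (hf : f ≠ 0) : ExactPD (A := A) k A 0 := by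
  refine ⟨?_, Ext.mk₀ (ModuleCat.ofHom f), fun h => hf ?_⟩
  · have : Projective (ModuleCat.of A A) := (IsProjective.iff_projective _).1 inferInstance
    exact (projective_iff_hasProjectiveDimensionLE_zero _).1 this
  · rw [Ext.mk₀_eq_zero_iff] at h
    ext
    simpa using congrArg (fun φ => φ.hom 1) h

lemma exactPD_congr (e : M₁ ≃ₗ[A] M₂) {j : ℕ} (h : ExactPD (A := A) k M₁ j) :
    ExactPD (A := A) k M₂ j := by
  have : Subsingleton (PUnit.{u+1}) := inferInstance
  refine exactPD_quotient (M₁ := PUnit.{u+1}) 0 e.toLinearMap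
    (Function.injective_of_subsingleton _) e.surjective ?_ ?_ h
  · intro x
    refine ⟨fun hx => ⟨0, ((LinearEquiv.map_eq_zero_iff e).1 hx).symm⟩, ?_⟩
    rintro ⟨_, rfl⟩
    simp
  · have : Limits.IsZero (ModuleCat.of A PUnit.{u+1}) := ModuleCat.isZero_of_subsingleton _
    have := this.hasProjectiveDimensionLT_zero
    exact hasProjectiveDimensionLT_of_ge _ 0 _ (by omega)

end ExactDimension

/-! ### Quotients of ideals -/

section IdealQuotients

universe u

open CategoryTheory CategoryTheory.Abelian

variable {A : Type u} [CommRing A] {k : Type u} [AddCommGroup k] [Module A k]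

lemma exact_inclusion_mkQ {J D : Ideal A} (h : D ≤ J) :
    Function.Exact (Submodule.inclusion h) (D.submoduleOf J).mkQ := by
  rw [LinearMap.exact_iff, Submodule.ker_mkQ, Submodule.range_inclusion]
  rfl

lemma exactPD_ideal_quotient {J D : Ideal A} (h : D ≤ J) {j : ℕ}
    (hD : HasProjectiveDimensionLT (ModuleCat.of A D) j) (hJ : ExactPD (A := A) k J j) :
    ExactPD (A := A) k (J ⧸ D.submoduleOf J) j :=
  exactPD_quotient (Submodule.inclusion h) _ (Submodule.inclusion_injective h)
    (Submodule.mkQ_surjective _) (exact_inclusion_mkQ h) hD hJ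

lemma exactPD_ideal_sub {J D : Ideal A} (h : D ≤ J) {j : ℕ}
    (hJ : HasProjectiveDimensionLE (ModuleCat.of A J) j)
    (hQ : ExactPD (A := A) k (J ⧸ D.submoduleOf J) (j + 1)) :
    ExactPD (A := A) k D j :=
  exactPD_sub (Submodule.inclusion h) _ (Submodule.inclusion_injective h)
    (Submodule.mkQ_surjective _) (exact_inclusion_mkQ h) hJ hQ

/-- If `x` is regular on `A / D` then `J / (D + x J)` is the quotient of `J / D` by the
regular element `x`, so its dimension is larger by one. -/
lemma exactPD_ideal_step {J D D' : Ideal A} {x : A} (hD' : D' = D ⊔ Ideal.span {x} * J)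
    (hx : ∀ c : k, x • c = 0) (hreg : ∀ f, x * f ∈ D → f ∈ D) {j : ℕ}
    (hQ : ExactPD (A := A) k (J ⧸ D.submoduleOf J) j) :
    ExactPD (A := A) k (J ⧸ D'.submoduleOf J) (j + 1) := by
  have hle : D.submoduleOf J ≤ D'.submoduleOf J :=
    Submodule.comap_mono (hD' ▸ le_sup_left)
  refine exactPD_smul x hx (Submodule.factor hle) ?_ (Submodule.factor_surjective hle) ?_ hQ
  · rw [← LinearMap.ker_eq_bot, LinearMap.ker_eq_bot']
    intro q hq
    obtain ⟨f, rfl⟩ := Submodule.Quotient.mk_surjective _ q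
    rw [LinearMap.lsmul_apply, ← Submodule.Quotient.mk_smul, Submodule.Quotient.mk_eq_zero] at hq
    rw [Submodule.Quotient.mk_eq_zero]
    exact hreg _ hq
  · intro q
    obtain ⟨f, rfl⟩ := Submodule.Quotient.mk_surjective _ q
    rw [← Submodule.mkQ_apply, Submodule.factor_mk, Submodule.mkQ_apply,
      Submodule.Quotient.mk_eq_zero]
    constructor
    · intro hf
      have hf' : (f : A) ∈ D ⊔ Ideal.span {x} * J := hD' ▸ hf
      obtain ⟨a, ha, b, hb, hab⟩ := Submodule.mem_sup.1 hf'
      obtain ⟨c, hc, rfl⟩ := Ideal.mem_span_singleton_mul.1 hb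
      refine ⟨(D.submoduleOf J).mkQ ⟨c, hc⟩, ?_⟩
      rw [LinearMap.lsmul_apply, ← map_smul, Submodule.mkQ_apply, Submodule.mkQ_apply,
        Submodule.Quotient.eq]
      change x * c - f ∈ D
      have : x * c - f = -a := by rw [← hab]; ring
      rw [this]
      exact D.neg_mem ha
    · rintro ⟨r, hr⟩
      obtain ⟨c, rfl⟩ := Submodule.Quotient.mk_surjective _ r
      rw [LinearMap.lsmul_apply, ← Submodule.Quotient.mk_smul, Submodule.mkQ_apply,
        Submodule.Quotient.eq] at hr
      change x * c - f ∈ D at hr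
      change (f : A) ∈ D'
      have : (f : A) = -(x * c - f) + x * c := by ring
      rw [this, hD']
      exact Ideal.add_mem _ (Ideal.mem_sup_left (D.neg_mem hr))
        (Ideal.mem_sup_right (Ideal.mul_mem_mul (Ideal.mem_span_singleton_self x) c.2))

end IdealQuotients

/-! ### Parallel classes, contractions and restrictions -/

section Combinatorics

variable {n : ℕ}

/-- The dual exchange property: the element `e`, lying in some basis, can be added to any basis
`u` at the expense of a suitable element of `u`. -/
lemma ExchangeProp.exists_insert_erase {B : Finset (Finset (Fin n))} (hB : ExchangeProp B)
    {u : Finset (Fin n)} (hu : u ∈ B) {e : Fin n} (he : ∃ T ∈ B, e ∈ T) (heu : e ∉ u) :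
    ∃ j ∈ u, insert e (u.erase j) ∈ B := by
  obtain ⟨T₀, hT₀, heT₀⟩ := he
  -- A basis `T` through `e` with `T ∩ u` largest is contained in `insert e u`: any other element
  -- of `T` could be exchanged for an element of `u`.
  obtain ⟨T, hT, hmax⟩ := (B.filter (e ∈ ·)).exists_max_image (fun T => (T ∩ u).card)
    ⟨T₀, by simp [hT₀, heT₀]⟩
  rw [Finset.mem_filter] at hT
  obtain ⟨hTB, heT⟩ := hT
  have hsub : ∀ i ∈ T, i ≠ e → i ∈ u := by
    intro i hiT hie
    by_contra hiu
    obtain ⟨j, hju, hjT, hj⟩ := hB T hTB u hu i hiT hiu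
    have h1 := hmax (insert j (T.erase i)) (by
      rw [Finset.mem_filter]
      exact ⟨hj, by simp [heT, hie.symm]⟩)
    have h2 : insert j (T ∩ u) ⊆ insert j (T.erase i) ∩ u := by
      intro z hz
      simp only [Finset.mem_insert, Finset.mem_inter, Finset.mem_erase] at hz ⊢
      grind
    have h3 := Finset.card_le_card h2
    rw [Finset.card_insert_of_notMem (by simp [hjT])] at h3
    omega
  -- Exchanging an element of `u \ T` for an element of `T \ u` can therefore only bring in `e`.
  have hnot : ¬ u ⊆ T := by
    intro h
    obtain ⟨j, hju, hjT, -⟩ := hB T hTB u hu e heT heu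
    exact hjT (h hju)
  obtain ⟨j, hju, hjT⟩ := Finset.not_subset.1 hnot
  obtain ⟨k, hkT, hku, hk⟩ := hB u hu T hTB j hju hjT
  obtain rfl : k = e := by
    by_contra h
    exact hku (hsub k hkT h)
  exact ⟨j, hju, hk⟩

/-- The parallel class of `y` in the ground set `E`: the element `y` together with all elements
that lie in no common basis with `y`. (This is the usual notion when there are no loops.) -/
def parClass (B : Finset (Finset (Fin n))) (E : Finset (Fin n)) (y : Fin n) :
    Finset (Fin n) :=
  E.filter fun x => x = y ∨ ∀ S ∈ B, ¬ (x ∈ S ∧ y ∈ S)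

/-- The bases of the contraction of `B` by `y`. -/
def contr (B : Finset (Finset (Fin n))) (y : Fin n) : Finset (Finset (Fin n)) :=
  (B.filter (y ∈ ·)).image (·.erase y)

/-- The bases in `B` whose elements from `P` all belong to the smaller set given last. -/
def restr (B : Finset (Finset (Fin n))) (P P' : Finset (Fin n)) : Finset (Finset (Fin n)) :=
  B.filter fun S => ∀ z ∈ S, z ∈ P → z ∈ P'

lemma mem_contr {B : Finset (Finset (Fin n))} {y : Fin n} {T : Finset (Fin n)} :
    T ∈ contr B y ↔ y ∉ T ∧ insert y T ∈ B := by
  simp only [contr, Finset.mem_image, Finset.mem_filter]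
  constructor
  · rintro ⟨S, ⟨hS, hy⟩, rfl⟩
    exact ⟨Finset.notMem_erase _ _, by rwa [Finset.insert_erase hy]⟩
  · rintro ⟨hy, hT⟩
    exact ⟨insert y T, ⟨hT, Finset.mem_insert_self _ _⟩, Finset.erase_insert hy⟩

lemma mem_restr {B : Finset (Finset (Fin n))} {P P' S : Finset (Fin n)} :
    S ∈ restr B P P' ↔ S ∈ B ∧ ∀ z ∈ S, z ∈ P → z ∈ P' := by
  simp [restr]

lemma mem_parClass {B : Finset (Finset (Fin n))} {E : Finset (Fin n)} {x y : Fin n} :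
    x ∈ parClass B E y ↔ x ∈ E ∧ (x = y ∨ ∀ S ∈ B, ¬ (x ∈ S ∧ y ∈ S)) := by
  simp [parClass]

/-- `B` is the set of bases of a matroid of rank `d` without loops on the ground set `E`. -/
structure IsLooplessMatroid (B : Finset (Finset (Fin n))) (E : Finset (Fin n)) (d : ℕ) :
    Prop where
  nonempty : B.Nonempty
  card_eq : ∀ S ∈ B, S.card = d
  exchange : ExchangeProp B
  subset : ∀ S ∈ B, S ⊆ E
  cover : ∀ i ∈ E, ∃ S ∈ B, i ∈ S

variable {B : Finset (Finset (Fin n))} {E : Finset (Fin n)} {d : ℕ} {y : Fin n}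

lemma IsLooplessMatroid.contr_exchange (hB : IsLooplessMatroid B E d) :
    ExchangeProp (contr B y) := by
  intro u hu v hv i hiu hiv
  rw [mem_contr] at hu hv
  obtain ⟨j, hjv, hju, hj⟩ := hB.exchange _ hu.2 _ hv.2 i (by simp [hiu])
    (by simp only [Finset.mem_insert, hiv, or_false]; rintro rfl; exact hu.1 hiu)
  have hiy : i ≠ y := by rintro rfl; exact hu.1 hiu
  simp only [Finset.mem_insert, not_or] at hju hjv
  refine ⟨j, hjv.resolve_left hju.1, hju.2, mem_contr.2 ⟨?_, ?_⟩⟩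
  · simp [Ne.symm hju.1, hu.1]
  · rwa [Finset.insert_comm, ← Finset.erase_insert_of_ne hiy.symm]

/-- An element `x` of a basis that is parallel to `y` may be replaced by `y`. -/
lemma IsLooplessMatroid.erase_mem_contr (hB : IsLooplessMatroid B E d) (hy : y ∈ E)
    {S : Finset (Fin n)} (hS : S ∈ B) {x : Fin n} (hxS : x ∈ S) (hxP : x ∈ parClass B E y) :
    S.erase x ∈ contr B y := by
  rw [mem_parClass] at hxP
  rcases hxP.2 with rfl | hx
  · exact mem_contr.2 ⟨by simp, by rwa [Finset.insert_erase hxS]⟩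
  · have hyS : y ∉ S := fun h => hx S hS ⟨hxS, h⟩
    obtain ⟨j, hj, hjB⟩ := hB.exchange.exists_insert_erase hS (hB.cover y hy) hyS
    obtain rfl : j = x := by
      by_contra hne
      exact hx _ hjB ⟨by simp [hxS, Ne.symm hne], by simp⟩
    exact mem_contr.2 ⟨by simp [hyS], hjB⟩

lemma notMem_of_mem_contr
    {T : Finset (Fin n)} (hT : T ∈ contr B y) {x : Fin n} (hxP : x ∈ parClass B E y) :
    x ∉ T := by
  rw [mem_contr] at hT
  rw [mem_parClass] at hxP
  rcases hxP.2 with rfl | hx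
  · exact hT.1
  · exact fun hxT => hx _ hT.2 ⟨by simp [hxT], by simp⟩

/-- In a basis containing `y`, the element `y` may be replaced by any parallel element `x`. -/
lemma IsLooplessMatroid.insert_mem (hB : IsLooplessMatroid B E d)
    {T : Finset (Fin n)} (hT : T ∈ contr B y) {x : Fin n} (hxP : x ∈ parClass B E y) :
    insert x T ∈ B := by
  have hxT := notMem_of_mem_contr hT hxP
  rw [mem_contr] at hT
  rw [mem_parClass] at hxP
  rcases hxP.2 with rfl | hx
  · exact hT.2
  · by_cases hxy : x = y
    · rw [hxy]; exact hT.2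
    obtain ⟨j, hj, hjB⟩ := hB.exchange.exists_insert_erase hT.2 (hB.cover x hxP.1)
      (by simp [hxT, hxy])
    by_cases hjy : j = y
    · subst hjy
      rwa [Finset.erase_insert hT.1] at hjB
    · exact absurd ⟨by simp, by simp [Ne.symm hjy]⟩ (hx _ hjB)

/-- Contracting `y` turns exactly the elements parallel to `y` into loops, so the contraction is
loopless on the complement of the parallel class. -/
lemma IsLooplessMatroid.contr (hB : IsLooplessMatroid B E (d + 1)) (hy : y ∈ E) :
    IsLooplessMatroid (contr B y) (E \ parClass B E y) d where
  nonempty := by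
    obtain ⟨S, hS, hyS⟩ := hB.cover y hy
    exact ⟨S.erase y, mem_contr.2 ⟨by simp, by rwa [Finset.insert_erase hyS]⟩⟩
  card_eq := fun T hT => by
    rw [mem_contr] at hT
    have := hB.card_eq _ hT.2
    rw [Finset.card_insert_of_notMem hT.1] at this
    omega
  exchange := hB.contr_exchange
  subset := fun T hT z hz => by
    rw [Finset.mem_sdiff]
    refine ⟨?_, fun hzP => notMem_of_mem_contr hT hzP hz⟩
    exact hB.subset _ (mem_contr.1 hT).2 (by simp [hz])
  cover := fun i hi => by
    rw [Finset.mem_sdiff, mem_parClass] at hi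
    have : ∃ S ∈ B, i ∈ S ∧ y ∈ S := by
      by_contra! h
      exact hi.2 ⟨hi.1, Or.inr fun S hS hSi => h S hS hSi.1 hSi.2⟩
    obtain ⟨S, hS, hiS, hyS⟩ := this
    have hiy : i ≠ y := fun h => hi.2 ⟨hi.1, Or.inl h⟩
    exact ⟨S.erase y, mem_contr.2 ⟨by simp, by rwa [Finset.insert_erase hyS]⟩, by simp [hiS, hiy]⟩

/-- The bases avoiding `P`, if there are any, still cover the complement of `P`, by the dual
exchange property. -/
lemma IsLooplessMatroid.restr (hB : IsLooplessMatroid B E d) {P : Finset (Fin n)}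
    (hne : (restr B P ∅).Nonempty) : IsLooplessMatroid (restr B P ∅) (E \ P) d where
  nonempty := hne
  card_eq := fun S hS => hB.card_eq S (mem_restr.1 hS).1
  exchange := by
    intro u hu v hv i hiu hiv
    rw [mem_restr] at hu hv
    obtain ⟨j, hjv, hju, hj⟩ := hB.exchange _ hu.1 _ hv.1 i hiu hiv
    refine ⟨j, hjv, hju, mem_restr.2 ⟨hj, fun z hz hzP => ?_⟩⟩
    rcases Finset.mem_insert.1 hz with rfl | hz
    · exact hv.2 z hjv hzP
    · exact hu.2 z (Finset.mem_of_mem_erase hz) hzP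
  subset := fun S hS z hz => by
    rw [mem_restr] at hS
    rw [Finset.mem_sdiff]
    exact ⟨hB.subset S hS.1 hz, fun hzP => by simpa using hS.2 z hz hzP⟩
  cover := fun i hi => by
    rw [Finset.mem_sdiff] at hi
    obtain ⟨S, hS⟩ := hne
    by_cases hiS : i ∈ S
    · exact ⟨S, hS, hiS⟩
    · rw [mem_restr] at hS
      obtain ⟨j, hj, hjB⟩ := hB.exchange.exists_insert_erase hS.1 (hB.cover i hi.1) hiS
      refine ⟨_, mem_restr.2 ⟨hjB, fun z hz hzP => ?_⟩, Finset.mem_insert_self _ _⟩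
      rcases Finset.mem_insert.1 hz with rfl | hz
      · exact absurd hzP hi.2
      · exact hS.2 z (Finset.mem_of_mem_erase hz) hzP

end Combinatorics

/-! ### The ideals generated by bases -/

section MonomialIdeals

variable {n : ℕ} (K : Type*) [Field K]

/-- The ideal generated by the square-free monomials with supports in `B`. -/
noncomputable def basisIdeal (B : Finset (Finset (Fin n))) : Ideal (MvPolynomial (Fin n) K) :=
  Ideal.span (sqMon K '' (B : Set (Finset (Fin n))))

variable {K}

lemma sqMon_mem {B : Finset (Finset (Fin n))} {S : Finset (Fin n)} (h : S ∈ B) :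
    sqMon K S ∈ basisIdeal K B := Ideal.subset_span ⟨S, h, rfl⟩

lemma X_mul_sqMon {S : Finset (Fin n)} {x : Fin n} (hx : x ∉ S) :
    X x * sqMon K S = sqMon K (insert x S) := by
  rw [sqMon, sqMon, Finset.prod_insert hx]

lemma sqMon_mem_of_erase {J : Ideal (MvPolynomial (Fin n) K)} {S : Finset (Fin n)} {x : Fin n}
    (hx : x ∈ S) (h : sqMon K (S.erase x) ∈ J) : sqMon K S ∈ J := by
  rw [← Finset.insert_erase hx, ← X_mul_sqMon (Finset.notMem_erase _ _)]
  exact J.mul_mem_left _ h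

lemma sqMon_eq_monomial (S : Finset (Fin n)) :
    sqMon K S = monomial (∑ i ∈ S, Finsupp.single i 1) 1 := by
  rw [sqMon, monomial_sum_one]
  rfl

lemma basisIdeal_eq (B : Finset (Finset (Fin n))) :
    basisIdeal K B = Ideal.span ((fun s => monomial s (1 : K)) ''
      ((fun S : Finset (Fin n) => ∑ i ∈ S, Finsupp.single i 1) '' (B : Set (Finset (Fin n))))) := by
  rw [Set.image_image, basisIdeal]
  congr 1
  exact Set.image_congr fun S _ => sqMon_eq_monomial S

/-- A variable that does not occur in the generators of a monomial ideal is a nonzerodivisor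
modulo the ideal. -/
lemma mem_of_X_mul_mem {B : Finset (Finset (Fin n))} {x : Fin n} (hx : ∀ S ∈ B, x ∉ S)
    (f : MvPolynomial (Fin n) K) (hf : X x * f ∈ basisIdeal K B) : f ∈ basisIdeal K B := by
  rw [basisIdeal_eq, mem_ideal_span_monomial_image] at hf ⊢
  intro m hm
  obtain ⟨_, ⟨S, hS, rfl⟩, hle⟩ := hf (Finsupp.single x 1 + m) (by
    rw [mem_support_iff, coeff_X_mul]
    exact mem_support_iff.1 hm)
  refine ⟨_, ⟨S, hS, rfl⟩, fun i => ?_⟩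
  have hi := hle i
  by_cases hix : i = x
  · subst hix
    have : (∑ j ∈ S, Finsupp.single j 1 : Fin n →₀ ℕ) i = 0 := by
      rw [Finsupp.finsetSum_apply]
      refine Finset.sum_eq_zero fun j hj => ?_
      rw [Finsupp.single_apply, if_neg]
      rintro rfl
      exact hx S hS hj
    simp only [this]
    exact Nat.zero_le _
  · simpa [Finsupp.single_apply, Ne.symm hix] using hi

variable {B : Finset (Finset (Fin n))} {E : Finset (Fin n)} {d : ℕ} {y : Fin n}

lemma basisIdeal_restr_le (hB : IsLooplessMatroid B E (d + 1)) (hy : y ∈ E)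
    (P' : Finset (Fin n)) :
    basisIdeal K (restr B (parClass B E y) P') ≤ basisIdeal K (contr B y) := by
  rw [basisIdeal, Ideal.span_le]
  rintro _ ⟨S, hS, rfl⟩
  have hS := (mem_restr.1 hS).1
  by_cases h : y ∈ S
  · exact sqMon_mem_of_erase h (sqMon_mem (mem_contr.2
      ⟨by simp, by rwa [Finset.insert_erase h]⟩))
  · obtain ⟨j, hj, hjB⟩ := hB.exchange.exists_insert_erase hS (hB.cover y hy) h
    exact sqMon_mem_of_erase hj (sqMon_mem (mem_contr.2 ⟨by simp [h], hjB⟩))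

/-- Allowing the bases to meet the parallel class in one more element `x` adds `x A` to the
ideal, where `A` is the ideal of the contraction. -/
lemma basisIdeal_restr_insert (hB : IsLooplessMatroid B E (d + 1)) (hy : y ∈ E)
    {P' : Finset (Fin n)} {x : Fin n} (hx : x ∈ parClass B E y) :
    basisIdeal K (restr B (parClass B E y) (insert x P')) =
      basisIdeal K (restr B (parClass B E y) P') ⊔
        Ideal.span {X x} * basisIdeal K (contr B y) := by
  apply le_antisymm
  · rw [basisIdeal, Ideal.span_le]
    rintro _ ⟨S, hS, rfl⟩
    obtain ⟨hSB, hSP⟩ := mem_restr.1 hS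
    by_cases hxS : x ∈ S
    · refine Ideal.mem_sup_right (Ideal.mem_span_singleton_mul.2
        ⟨sqMon K (S.erase x), sqMon_mem (hB.erase_mem_contr hy hSB hxS hx), ?_⟩)
      rw [X_mul_sqMon (Finset.notMem_erase _ _), Finset.insert_erase hxS]
    · refine Ideal.mem_sup_left (sqMon_mem (mem_restr.2 ⟨hSB, fun z hz hzP => ?_⟩))
      refine Finset.mem_of_mem_insert_of_ne (hSP z hz hzP) ?_
      rintro rfl
      exact hxS hz
  · refine sup_le (Ideal.span_mono (Set.image_mono fun S hS => ?_)) ?_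
    · obtain ⟨hSB, hSP⟩ := mem_restr.1 hS
      exact mem_restr.2 ⟨hSB, fun z hz hzP => Finset.mem_insert_of_mem (hSP z hz hzP)⟩
    · rw [basisIdeal, basisIdeal, Ideal.span_mul_span', Ideal.span_le]
      rintro _ ⟨_, rfl, _, ⟨T, hT, rfl⟩, rfl⟩
      change X x * sqMon K T ∈ _
      rw [X_mul_sqMon (notMem_of_mem_contr hT hx)]
      refine sqMon_mem (mem_restr.2 ⟨hB.insert_mem hT hx, fun z hz hzP => ?_⟩)
      rcases Finset.mem_insert.1 hz with rfl | hz
      · exact Finset.mem_insert_self _ _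
      · exact absurd hz (notMem_of_mem_contr hT hzP)

end MonomialIdeals

/-! ### Induction on the ground set -/

section Induction

universe u

open CategoryTheory

variable {K : Type u} [Field K] {n : ℕ} {k : Type u} [AddCommGroup k]
  [Module (MvPolynomial (Fin n) K) k]

/-- Letting the bases meet the parallel class in more elements, one at a time, is a sequence of
quotients by regular elements; each raises the dimension by one. -/
lemma exactPD_quotient_restr (hk : ∀ (i : Fin n) (c : k), (X i : MvPolynomial (Fin n) K) • c = 0)
    {B : Finset (Finset (Fin n))} {E : Finset (Fin n)} {d j : ℕ} {y : Fin n}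
    (hB : IsLooplessMatroid B E (d + 1)) (hy : y ∈ E)
    (h : ExactPD (A := MvPolynomial (Fin n) K) k
      (basisIdeal K (contr B y) ⧸
        (basisIdeal K (restr B (parClass B E y) ∅)).submoduleOf (basisIdeal K (contr B y))) j)
    (P' : Finset (Fin n)) (hP' : P' ⊆ parClass B E y) :
    ExactPD (A := MvPolynomial (Fin n) K) k
      (basisIdeal K (contr B y) ⧸
        (basisIdeal K (restr B (parClass B E y) P')).submoduleOf (basisIdeal K (contr B y)))
      (j + P'.card) := by
  induction P' using Finset.induction_on with
  | empty => exact h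
  | insert x P' hx ih =>
    rw [Finset.card_insert_of_notMem hx, ← add_assoc]
    have hxP := hP' (Finset.mem_insert_self x P')
    refine exactPD_ideal_step (basisIdeal_restr_insert hB hy hxP) (hk x)
      (mem_of_X_mul_mem fun S hS hxS => ?_) (ih fun z hz => hP' (Finset.mem_insert_of_mem hz))
    exact hx ((mem_restr.1 hS).2 x hxS hxP)

/-- The ideal of a loopless matroid of rank `d` on `m` elements has projective dimension
`m - d`, detected by any module `k` annihilated by the variables to which the polynomial ring
maps nontrivially. -/
theorem exactPD_basisIdeal
    (hk : ∀ (i : Fin n) (c : k), (X i : MvPolynomial (Fin n) K) • c = 0)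
    (ε : MvPolynomial (Fin n) K →ₗ[MvPolynomial (Fin n) K] k) (hε : ε ≠ 0) (m : ℕ) :
    ∀ (B : Finset (Finset (Fin n))) (E : Finset (Fin n)) (d : ℕ), E.card = m →
      IsLooplessMatroid B E d →
      ExactPD (A := MvPolynomial (Fin n) K) k (basisIdeal K B) (m - d) := by
  induction m using Nat.strong_induction_on with
  | _ m ih =>
  intro B E d hm hB
  rcases d with _ | d
  · have hempty : ∀ S ∈ B, S = ∅ := fun S hS => Finset.card_eq_zero.1 (hB.card_eq S hS)
    have hE : E = ∅ := by
      refine Finset.eq_empty_of_forall_notMem fun i hi => ?_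
      obtain ⟨S, hS, hiS⟩ := hB.cover i hi
      simp [hempty S hS] at hiS
    have htop : basisIdeal K B = ⊤ := by
      obtain ⟨S, hS⟩ := hB.nonempty
      rw [Ideal.eq_top_iff_one]
      have := sqMon_mem (K := K) hS
      rwa [hempty S hS, sqMon, Finset.prod_empty] at this
    subst hE
    obtain rfl : m = 0 := by simpa using hm.symm
    rw [htop]
    exact exactPD_congr Submodule.topEquiv.symm (exactPD_self ε hε)
  · obtain ⟨S₀, hS₀⟩ := hB.nonempty
    obtain ⟨y, hyS₀⟩ : S₀.Nonempty := by
      rw [← Finset.card_pos, hB.card_eq _ hS₀]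
      omega
    have hy : y ∈ E := hB.subset _ hS₀ hyS₀
    have hPE : parClass B E y ⊆ E := Finset.filter_subset _ _
    have hyP : y ∈ parClass B E y := mem_parClass.2 ⟨hy, Or.inl rfl⟩
    have hPpos : 0 < (parClass B E y).card := Finset.card_pos.2 ⟨y, hyP⟩
    have hcard := Finset.card_sdiff_add_card_eq_card hPE
    have hA := hB.contr hy
    have hdle : d ≤ (E \ parClass B E y).card := by
      obtain ⟨T, hT⟩ := hA.nonempty
      rw [← hA.card_eq T hT]
      exact Finset.card_le_card (hA.subset T hT)
    have hPDA := ih _ (by omega) _ _ d rfl hA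
    -- With `P` the parallel class of `y`, `q` is the size of `E \ P`, the ground set of both
    -- smaller matroids.
    set q := (E \ parClass B E y).card with hq
    have hPDC : HasProjectiveDimensionLT (ModuleCat.of (MvPolynomial (Fin n) K)
        (basisIdeal K (restr B (parClass B E y) ∅))) (q - d) := by
      rcases (restr B (parClass B E y) ∅).eq_empty_or_nonempty with h | h
      · have hbot : basisIdeal K (restr B (parClass B E y) ∅) = ⊥ := by
          rw [h, basisIdeal]
          simp
        rw [hbot]
        have : Limits.IsZero (ModuleCat.of (MvPolynomial (Fin n) K)
            (⊥ : Ideal (MvPolynomial (Fin n) K))) := ModuleCat.isZero_of_subsingleton _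
        have := this.hasProjectiveDimensionLT_zero
        exact hasProjectiveDimensionLT_of_ge _ 0 _ (by omega)
      · have hC := hB.restr h
        have hdlt : d + 1 ≤ q := by
          obtain ⟨T, hT⟩ := hC.nonempty
          rw [← hC.card_eq T hT]
          exact Finset.card_le_card (hC.subset T hT)
        have := (ih _ (by omega) _ _ (d + 1) rfl hC).1
        have h2 : q - (d + 1) + 1 = q - d := by omega
        rw [← h2]
        exact this
    -- Write `A`, `C`, `I` for the ideals of the contraction, of the bases avoiding `P` and of all
    -- bases. The dimension is `q - d` for `A / C` and `q - d + |P|` for `A / I`.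
    have hAC := exactPD_ideal_quotient (basisIdeal_restr_le hB hy ∅) hPDC hPDA
    have hAI := exactPD_quotient_restr hk hB hy hAC _ subset_rfl
    have hfull : restr B (parClass B E y) (parClass B E y) = B := by
      ext S
      simp [mem_restr]
    have hle := basisIdeal_restr_le (K := K) hB hy (parClass B E y)
    rw [hfull] at hAI hle
    have heq : q - d + (parClass B E y).card = m - (d + 1) + 1 := by omega
    rw [heq] at hAI
    refine exactPD_ideal_sub hle ?_ hAI
    have := hPDA.1
    exact hasProjectiveDimensionLT_of_ge _ (q - d + 1) _ (by omega)

end Induction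

/-- Let `I` be a matroidal ideal of degree `d` in `R = K[x_1, …, x_n]`
with `supp(I) = {x_1, …, x_n}`.  Then the projective dimension of `I` as an `R`-module is
`pd_R(I) = n − d`. -/
theorem statement5 {K : Type*} [Field K] {n d : ℕ}
    {I : Ideal (MvPolynomial (Fin n) K)} {B : Finset (Finset (Fin n))}
    (hI : IsMatroidal K I B d) (hsupp : FullSupport B) :
    HasProjDimLE (ModuleCat.of (MvPolynomial (Fin n) K) I) (n - d) ∧
    ∀ k : ℕ, HasProjDimLE (ModuleCat.of (MvPolynomial (Fin n) K) I) k → n - d ≤ k := by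

  obtain ⟨hne, hcard, hexch, rfl⟩ := hI
  -- The residue field at the origin, realized in the universe of the polynomial ring.
  let m : Ideal (MvPolynomial (Fin n) K) := RingHom.ker (constantCoeff (σ := Fin n) (R := K))
  have hk (i : Fin n) (c : MvPolynomial (Fin n) K ⧸ m) :
      (X i : MvPolynomial (Fin n) K) • c = 0 := by
    obtain ⟨f, rfl⟩ := Submodule.Quotient.mk_surjective _ c
    rw [← Submodule.Quotient.mk_smul, Submodule.Quotient.mk_eq_zero, smul_eq_mul]
    simp [m, RingHom.mem_ker]
  have hε : m.mkQ ≠ 0 := by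
    intro h
    have h1 : m.mkQ 1 = 0 := by rw [h]; rfl
    rw [Submodule.mkQ_apply, Submodule.Quotient.mk_eq_zero] at h1
    simp [m, RingHom.mem_ker] at h1
  have hB : IsLooplessMatroid B Finset.univ d :=
    ⟨hne, hcard, hexch, fun S _ => S.subset_univ, fun i _ => hsupp i⟩
  obtain ⟨hle, e, he⟩ := exactPD_basisIdeal hk m.mkQ hε n B Finset.univ d (by simp) hB
  refine ⟨hasProjDimLE_of_hasProjectiveDimensionLE _ _ hle, fun k hkd => ?_⟩
  by_contra! hlt
  exact he (ext_eq_zero_of_hasProjDimLE hkd hlt e)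
end
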